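/- Let n ∈ ℕ, n ≥ 2, and c ∈ ℝ. The operator T₂(c) = (Δ² + c|x|⁻⁴) with domain C₀^∞(ℝⁿ∖{0}) is essentially self-adjoint in L²(ℝⁿ; dⁿx) if and only if c ≥ 3(n+2)(6−n) when 2 ≤ n ≤ 5, and c ≥ −n(n+4)(n−4)(n−8)/16 when n ≥ 6. -/

import Mathlib

open MeasureTheory

noncomputable section

/-- A densely defined operator `T` in a complex Hilbert space is *essentially self-adjoint*
if its adjoint `T*` is self-adjoint (equivalently, its closure is self-adjoint). -/
def EssentiallySelfAdjoint {H : Type*} [NormedAddCommGroup H] [InnerProductSpace ℂ H]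
    [CompleteSpace H] (T : H →ₗ.[ℂ] H) : Prop :=
  Dense (T.domain : Set H) ∧ IsSelfAdjoint T.adjoint

/-- The Laplacian of `f : ℝⁿ → ℂ`. -/
def laplacian {n : ℕ} (f : EuclideanSpace ℝ (Fin n) → ℂ) (x : EuclideanSpace ℝ (Fin n)) : ℂ :=
  ∑ i : Fin n, fderiv ℝ (fun y => fderiv ℝ f y (EuclideanSpace.single i (1:ℝ))) x
    (EuclideanSpace.single i (1:ℝ))

/-- The graph of the operator given by the formal differential expression `L` with domain
`C₀^∞(ℝⁿ \ {0})`, as a subspace of `L²(ℝⁿ) × L²(ℝⁿ)`. -/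
def graphOf (n : ℕ) (L : (EuclideanSpace ℝ (Fin n) → ℂ) → (EuclideanSpace ℝ (Fin n) → ℂ)) :
    Submodule ℂ (Lp ℂ 2 (volume : Measure (EuclideanSpace ℝ (Fin n))) ×
      Lp ℂ 2 (volume : Measure (EuclideanSpace ℝ (Fin n)))) :=
  Submodule.span ℂ {p | ∃ φ : EuclideanSpace ℝ (Fin n) → ℂ,
    ContDiff ℝ (⊤ : ℕ∞) φ ∧ HasCompactSupport φ ∧ (0 : EuclideanSpace ℝ (Fin n)) ∉ tsupport φ ∧
    (p.1 : EuclideanSpace ℝ (Fin n) → ℂ) =ᵐ[volume] φ ∧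
    (p.2 : EuclideanSpace ℝ (Fin n) → ℂ) =ᵐ[volume] L φ}

/-- The operator in `L²(ℝⁿ)` given by the formal differential expression `L` with domain
`C₀^∞(ℝⁿ \ {0})`. -/
def opOn (n : ℕ) (L : (EuclideanSpace ℝ (Fin n) → ℂ) → (EuclideanSpace ℝ (Fin n) → ℂ)) :
    Lp ℂ 2 (volume : Measure (EuclideanSpace ℝ (Fin n))) →ₗ.[ℂ]
      Lp ℂ 2 (volume : Measure (EuclideanSpace ℝ (Fin n))) :=
  (graphOf n L).toLinearPMap

/-- The operator `Δ² + c|x|⁻⁴` with domain `C₀^∞(ℝⁿ \ {0})` in `L²(ℝⁿ)`. -/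
def T2op (n : ℕ) (c : ℝ) :
    Lp ℂ 2 (volume : Measure (EuclideanSpace ℝ (Fin n))) →ₗ.[ℂ]
      Lp ℂ 2 (volume : Measure (EuclideanSpace ℝ (Fin n))) :=
  opOn n (fun φ x => laplacian (laplacian φ) x + ((c * (‖x‖ ^ 4)⁻¹ : ℝ) : ℂ) * φ x)

open Filter Topology

lemma norm_mul_exp_le_of_first_order {z : ℂ} (hz : 2 ≤ z.re) {w f : ℝ → ℂ}
    (hw : ∀ s, HasDerivAt w (f s - z * w s) s) {r s M : ℝ} (hM : 0 ≤ M) (hrs : r ≤ s)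
    (hf : ∀ t, r ≤ t → t ≤ s → ‖f t‖ ≤ M * Real.exp (2 * t)) :
    ‖w s‖ * Real.exp (z.re * s) ≤
      ‖w r‖ * Real.exp (z.re * r) + M * Real.exp ((z.re + 2) * s) := by
  have hE : ∀ t : ℝ, HasDerivAt (fun t : ℝ => Complex.exp (z * t)) (Complex.exp (z * t) * z) t := by
    intro t
    have h := ((Complex.ofRealCLM.hasDerivAt (x := t)).const_mul z).cexp
    simpa using h
  have hn : ∀ t : ℝ, ‖Complex.exp (z * t)‖ = Real.exp (z.re * t) := by
    intro t; rw [Complex.norm_exp]; simp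
  have hW : ∀ t : ℝ, HasDerivAt (fun t : ℝ => Complex.exp (z * t) * w t) (Complex.exp (z * t) * f t) t := by
    intro t
    refine ((hE t).mul (hw t)).congr_deriv ?_
    ring
  have hB : ∀ t : ℝ, HasDerivAt (fun t : ℝ => ‖w r‖ * Real.exp (z.re * r) +
      M * Real.exp ((z.re + 2) * t)) (M * (Real.exp ((z.re + 2) * t) * (z.re + 2))) t := by
    intro t
    have h := (((hasDerivAt_id t).const_mul (z.re + 2)).exp.const_mul M).const_add
      (‖w r‖ * Real.exp (z.re * r))
    simpa using h
  have key := image_norm_le_of_norm_deriv_right_le_deriv_boundary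
    (a := r) (b := s) (f := fun t : ℝ => Complex.exp (z * t) * w t)
    (f' := fun t => Complex.exp (z * t) * f t)
    (fun t _ => (hW t).continuousAt.continuousWithinAt)
    (fun t _ => (hW t).hasDerivWithinAt) (B := fun t : ℝ => ‖w r‖ * Real.exp (z.re * r) +
      M * Real.exp ((z.re + 2) * t))
    (by
      simp only [norm_mul, hn]
      have : 0 ≤ M * Real.exp ((z.re + 2) * r) := by positivity
      linarith) hB
    (by
      intro t ht
      have h1 := hf t ht.1 ht.2.le
      rw [norm_mul, hn]
      calc Real.exp (z.re * t) * ‖f t‖ ≤ Real.exp (z.re * t) * (M * Real.exp (2 * t)) := by gcongr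
        _ = M * (Real.exp ((z.re + 2) * t) * 1) := by rw [add_mul, Real.exp_add]; ring
        _ ≤ _ := by gcongr; linarith)
  have := key (Set.right_mem_Icc.2 hrs)
  simpa [norm_mul, hn, mul_comm] using this

lemma tendsto_exp_mul_norm_of_first_order {z : ℂ} (hz : 2 ≤ z.re) {w f : ℝ → ℂ}
    (hw : ∀ s, HasDerivAt w (f s - z * w s) s)
    (hwl : Tendsto (fun s => ‖w s‖ * Real.exp (2 * s)) atBot (𝓝 0))
    (hf : Tendsto (fun s => ‖f s‖ * Real.exp (-2 * s)) (cocompact ℝ) (𝓝 0)) :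
    Tendsto (fun s => ‖w s‖ * Real.exp (-2 * s)) (cocompact ℝ) (𝓝 0) := by
  rw [cocompact_eq_atBot_atTop, tendsto_sup] at hf ⊢
  obtain ⟨hfb, hft⟩ := hf
  have aux : ∀ t M, ‖f t‖ * Real.exp (-2 * t) < M → ‖f t‖ ≤ M * Real.exp (2 * t) := by
    intro t M h
    have h1 : Real.exp (-2 * t) * Real.exp (2 * t) = 1 := by rw [← Real.exp_add]; simp
    have h2 := mul_le_mul_of_nonneg_right h.le (Real.exp_pos (2 * t)).le
    rwa [mul_assoc, h1, mul_one] at h2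
  have e1 : ∀ s : ℝ, Real.exp ((z.re + 2) * s) = Real.exp (z.re * s) * Real.exp (2 * s) := by
    intro s; rw [← Real.exp_add]; ring_nf
  have e2 : ∀ s : ℝ, Real.exp (2 * s) * Real.exp (-2 * s) = 1 := by
    intro s; rw [← Real.exp_add]; simp
  constructor
  · rw [Metric.tendsto_nhds] at *
    intro ε hε
    have h1 := hfb (ε / 2) (by positivity)
    rw [eventually_atBot] at h1
    obtain ⟨a, ha⟩ := h1
    filter_upwards [eventually_le_atBot a] with s hs
    have hbound : ∀ r, r ≤ s → ‖w s‖ * Real.exp (z.re * s) ≤ ‖w r‖ * Real.exp (z.re * r) +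
        (ε / 2) * Real.exp ((z.re + 2) * s) := by
      intro r hr
      refine norm_mul_exp_le_of_first_order hz hw (by positivity) hr (fun t _ ht => aux t _ ?_)
      have := ha t (ht.trans hs)
      rw [Real.dist_eq, sub_zero] at this
      exact (le_abs_self _).trans_lt this
    have hlim : Tendsto (fun r => ‖w r‖ * Real.exp (z.re * r)) atBot (𝓝 0) := by
      have hwl' : Tendsto (fun s => ‖w s‖ * Real.exp (2 * s)) atBot (𝓝 0) := by
        rw [Metric.tendsto_nhds]; exact hwl
      refine squeeze_zero' (Eventually.of_forall fun r => by positivity) ?_ hwl'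
      filter_upwards [eventually_le_atBot (0:ℝ)] with r hr
      gcongr ?_ * Real.exp ?_
      nlinarith
    have h3 : ‖w s‖ * Real.exp (z.re * s) ≤ 0 + (ε / 2) * Real.exp ((z.re + 2) * s) := by
      refine ge_of_tendsto (hlim.add_const _) ?_
      filter_upwards [eventually_le_atBot s] with r hr using hbound r hr
    rw [zero_add, e1, mul_left_comm, mul_comm] at h3
    have h4 := le_of_mul_le_mul_left h3 (Real.exp_pos _)
    rw [Real.dist_eq, sub_zero, abs_of_nonneg (by positivity)]
    calc ‖w s‖ * Real.exp (-2 * s) ≤ (ε / 2 * Real.exp (2 * s)) * Real.exp (-2 * s) := by gcongr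
      _ = ε / 2 := by rw [mul_assoc, e2, mul_one]
      _ < ε := by linarith
  · rw [Metric.tendsto_nhds] at *
    intro ε hε
    have h1 := hft (ε / 2) (by positivity)
    rw [eventually_atTop] at h1
    obtain ⟨a, ha⟩ := h1
    have hlim : Tendsto (fun s : ℝ => ‖w a‖ * Real.exp (z.re * a) * Real.exp (-(z.re + 2) * s))
        atTop (𝓝 0) := by
      have : Tendsto (fun s : ℝ => Real.exp (-(z.re + 2) * s)) atTop (𝓝 0) :=
        Real.tendsto_exp_atBot.comp (tendsto_id.const_mul_atTop_of_neg (by linarith))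
      simpa using this.const_mul (‖w a‖ * Real.exp (z.re * a))
    rw [Metric.tendsto_nhds] at hlim
    filter_upwards [eventually_ge_atTop a, hlim (ε / 2) (by positivity)] with s hs hls
    have h3 : ‖w s‖ * Real.exp (z.re * s) ≤ ‖w a‖ * Real.exp (z.re * a) +
        (ε / 2) * Real.exp ((z.re + 2) * s) := by
      refine norm_mul_exp_le_of_first_order hz hw (by positivity) hs (fun t ht _ => aux t _ ?_)
      have := ha t ht
      rw [Real.dist_eq, sub_zero] at this
      exact (le_abs_self _).trans_lt this
    rw [Real.dist_eq, sub_zero, abs_of_nonneg (by positivity)] at hls ⊢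
    have h5 : Real.exp (z.re * s) * Real.exp (-(z.re + 2) * s) = Real.exp (-2 * s) := by
      rw [← Real.exp_add]; ring_nf
    have h6 : Real.exp ((z.re + 2) * s) * Real.exp (-(z.re + 2) * s) = 1 := by
      rw [← Real.exp_add, ← Real.exp_zero]; ring_nf
    have h4 := mul_le_mul_of_nonneg_right h3 (Real.exp_pos (-(z.re + 2) * s)).le
    rw [add_mul, mul_assoc, h5, mul_assoc (ε / 2), h6, mul_one] at h4
    linarith

lemma tendsto_integral_im_conj_mul {p q : ℝ} {z₁ z₂ : ℂ} (h₁ : 2 ≤ z₁.re) (h₂ : 2 ≤ z₂.re)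
    (hp : z₁ + z₂ = p) (hq : z₁ * z₂ = q) {g₀ g₁ g₂ g₃ g₄ : ℝ → ℂ}
    (d₀ : ∀ s, HasDerivAt g₀ (g₁ s) s) (d₁ : ∀ s, HasDerivAt g₁ (g₂ s) s)
    (d₂ : ∀ s, HasDerivAt g₂ (g₃ s) s) (d₃ : ∀ s, HasDerivAt g₃ (g₄ s) s) (c₄ : Continuous g₄)
    (l₀ : Tendsto (fun s => ‖g₀ s‖ * Real.exp (2 * s)) (cocompact ℝ) (𝓝 0))
    (l₁ : Tendsto (fun s => ‖g₁ s‖ * Real.exp (2 * s)) (cocompact ℝ) (𝓝 0))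
    (l₂ : Tendsto (fun s => ‖g₂ s‖ * Real.exp (2 * s)) (cocompact ℝ) (𝓝 0))
    (l₃ : Tendsto (fun s => ‖g₃ s‖ * Real.exp (2 * s)) (cocompact ℝ) (𝓝 0))
    (lF : Tendsto (fun s => ‖g₄ s + (2 * q - p ^ 2) * g₂ s + q ^ 2 * g₀ s‖ * Real.exp (-2 * s))
      (cocompact ℝ) (𝓝 0)) :
    Tendsto (fun R => ∫ s in (-R)..R,
      ((starRingEnd ℂ) (g₀ s) * (g₄ s + (2 * q - p ^ 2) * g₂ s + q ^ 2 * g₀ s)).im)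
      atTop (𝓝 0) := by
  set F : ℝ → ℂ := fun s => g₄ s + (2 * q - p ^ 2) * g₂ s + q ^ 2 * g₀ s with hF
  set X : ℝ → ℂ := fun s => g₃ s + (z₂ - p) * g₂ s + (q - z₂ * p) * g₁ s + z₂ * q * g₀ s with hX
  set G : ℝ → ℂ := fun s => g₂ s - p * g₁ s + q * g₀ s with hG
  have hXd : ∀ s, HasDerivAt X (F s - z₁ * X s) s := by
    intro s
    refine ((((d₃ s).add ((d₂ s).const_mul (z₂ - p))).add ((d₁ s).const_mul (q - z₂ * p))).add
      ((d₀ s).const_mul (z₂ * q))).congr_deriv ?_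
    simp only [hF, hX, ← hp, ← hq]
    ring
  have hGd : ∀ s, HasDerivAt G (X s - z₂ * G s) s := by
    intro s
    refine (((d₂ s).sub ((d₁ s).const_mul (p:ℂ))).add ((d₀ s).const_mul (q:ℂ))).congr_deriv ?_
    simp only [hX, hG, ← hp, ← hq]
    ring
  have comb : ∀ (a b c d : ℂ), Tendsto (fun s => ‖a * g₃ s + b * g₂ s + c * g₁ s + d * g₀ s‖ *
      Real.exp (2 * s)) (cocompact ℝ) (𝓝 0) := by
    intro a b c d
    have := (((l₃.const_mul ‖a‖).add (l₂.const_mul ‖b‖)).add (l₁.const_mul ‖c‖)).add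
      (l₀.const_mul ‖d‖)
    simp only [mul_zero, add_zero] at this
    refine squeeze_zero (fun s => by positivity) (fun s => ?_) this
    have h := norm_add₄_le (a := a * g₃ s) (b := b * g₂ s) (c := c * g₁ s) (d := d * g₀ s)
    simp only [norm_mul] at h
    calc _ ≤ (‖a‖ * ‖g₃ s‖ + ‖b‖ * ‖g₂ s‖ + ‖c‖ * ‖g₁ s‖ + ‖d‖ * ‖g₀ s‖) * Real.exp (2 * s) := by
          gcongr
      _ = _ := by ring
  have hle : (atBot : Filter ℝ) ≤ cocompact ℝ := by
    rw [cocompact_eq_atBot_atTop]; exact le_sup_left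
  have hXl : Tendsto (fun s => ‖X s‖ * Real.exp (-2 * s)) (cocompact ℝ) (𝓝 0) := by
    refine tendsto_exp_mul_norm_of_first_order h₁ hXd (Tendsto.mono_left ?_ hle) lF
    simpa only [one_mul] using comb 1 (z₂ - p) (q - z₂ * p) (z₂ * q)
  have hGl : Tendsto (fun s => ‖G s‖ * Real.exp (-2 * s)) (cocompact ℝ) (𝓝 0) := by
    refine tendsto_exp_mul_norm_of_first_order h₂ hGd (Tendsto.mono_left ?_ hle) hXl
    have := comb 0 1 (-p) q
    simpa only [one_mul, zero_mul, zero_add, neg_mul, ← sub_eq_add_neg] using this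
  have hYl : Tendsto (fun s => ‖g₁ s - (starRingEnd ℂ) z₁ * g₀ s‖ * Real.exp (2 * s))
      (cocompact ℝ) (𝓝 0) := by
    have := comb 0 0 1 (-(starRingEnd ℂ) z₁)
    simpa only [one_mul, zero_mul, zero_add, neg_mul, ← sub_eq_add_neg] using this
  set B : ℝ → ℂ := fun s => (starRingEnd ℂ) (g₀ s) * X s -
    (starRingEnd ℂ) (g₁ s - (starRingEnd ℂ) z₁ * g₀ s) * G s with hB
  have dconj : ∀ {f : ℝ → ℂ} {f' : ℂ} {s : ℝ}, HasDerivAt f f' s →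
      HasDerivAt (fun s => (starRingEnd ℂ) (f s)) ((starRingEnd ℂ) f') s := by
    intro f f' s h
    exact (Complex.conjCLE.toContinuousLinearMap.hasFDerivAt.comp_hasDerivAt s h)
  have hBd : ∀ s, HasDerivAt B ((starRingEnd ℂ) (g₀ s) * F s - (starRingEnd ℂ) (G s) * G s) s := by
    intro s
    refine (((dconj (d₀ s)).mul (hXd s)).sub
      ((dconj ((d₁ s).sub ((d₀ s).const_mul _))).mul (hGd s))).congr_deriv ?_
    have e1 : (starRingEnd ℂ) (G s) = (starRingEnd ℂ) (g₂ s) - (z₁ + z₂) * (starRingEnd ℂ) (g₁ s)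
        + z₁ * z₂ * (starRingEnd ℂ) (g₀ s) := by
      rw [hp, hq]; simp [hG]
    rw [e1]
    simp only [Pi.sub_apply, map_sub, map_mul, Complex.conj_conj]
    ring
  have hBl : Tendsto (fun s => ‖B s‖) (cocompact ℝ) (𝓝 0) := by
    have := (l₀.mul hXl).add (hYl.mul hGl)
    simp only [mul_zero, add_zero] at this
    refine squeeze_zero (fun s => by positivity) (fun s => ?_) this
    have e2 : Real.exp (2 * s) * Real.exp (-2 * s) = 1 := by
      rw [← Real.exp_add]; simp
    refine (norm_sub_le _ _).trans (le_of_eq ?_)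
    simp only [norm_mul, RCLike.norm_conj]
    calc _ = (‖g₀ s‖ * ‖X s‖ + ‖g₁ s - (starRingEnd ℂ) z₁ * g₀ s‖ * ‖G s‖) * 1 := by ring
      _ = _ := by rw [← e2]; ring
  have hint : ∀ R : ℝ, ∫ s in (-R)..R, ((starRingEnd ℂ) (g₀ s) * F s).im
      = (B R).im - (B (-R)).im := by
    intro R
    refine intervalIntegral.integral_eq_sub_of_hasDerivAt (f := fun s => (B s).im) (fun s _ => ?_) ?_
    · have h := Complex.imCLM.hasFDerivAt.comp_hasDerivAt s (hBd s)
      refine h.congr_deriv ?_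
      simp [Complex.conj_mul', ← Complex.ofReal_pow]
    · have k0 : Continuous g₀ := continuous_iff_continuousAt.2 fun s => (d₀ s).continuousAt
      have k2 : Continuous g₂ := continuous_iff_continuousAt.2 fun s => (d₂ s).continuousAt
      apply Continuous.intervalIntegrable
      simp only [hF]
      fun_prop
  rw [funext hint]
  have hBim : Tendsto (fun s => (B s).im) (cocompact ℝ) (𝓝 0) :=
    squeeze_zero_norm (fun s => by simpa using Complex.abs_im_le_norm (B s)) hBl
  rw [cocompact_eq_atBot_atTop, tendsto_sup] at hBim
  simpa using hBim.2.sub (hBim.1.comp tendsto_neg_atTop_atBot)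

lemma lintegral_mul_sq_le {α : Type*} [MeasurableSpace α] {μ : Measure α} {φ f : α → ENNReal}
    (hφ : AEMeasurable φ μ) (hf : AEMeasurable f μ) :
    (∫⁻ a, φ a * f a ∂μ) ^ 2 ≤ (∫⁻ a, φ a ∂μ) * ∫⁻ a, φ a * f a ^ 2 ∂μ := by
  have hpq : (2:ℝ).HolderConjugate 2 := Real.HolderConjugate.two_two
  have h := ENNReal.lintegral_mul_le_Lp_mul_Lq μ hpq (f := fun a => φ a ^ (1/2:ℝ))
    (g := fun a => φ a ^ (1/2:ℝ) * f a) (hφ.pow_const _) ((hφ.pow_const _).mul hf)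
  have hsq : ∀ x : ENNReal, x ^ (1/2:ℝ) * x ^ (1/2:ℝ) = x := fun x => by
    rw [← ENNReal.rpow_add_of_nonneg _ _ (by norm_num) (by norm_num)]; norm_num
  have hsq_im : ∀ x : ENNReal, (x ^ (1/2:ℝ)) ^ 2 = x := fun x => by rw [sq, hsq]
  have h1 : ∀ a, φ a ^ (1/2:ℝ) * (φ a ^ (1/2:ℝ) * f a) = φ a * f a := fun a => by
    rw [← mul_assoc, hsq]
  simp only [Pi.mul_apply, h1, ENNReal.rpow_two, mul_pow, hsq_im] at h
  calc _ ≤ _ := pow_le_pow_left₀ zero_le h 2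
    _ = _ := by rw [mul_pow, hsq_im, hsq_im]

/-- Convolution of a real function with a complex one. -/
abbrev cv (Φ : ℝ → ℝ) (K : ℝ → ℂ) : ℝ → ℂ :=
  convolution Φ K (ContinuousLinearMap.lsmul ℝ ℝ) volume

lemma cv_apply (Φ : ℝ → ℝ) (K : ℝ → ℂ) (s : ℝ) : cv Φ K s = ∫ t, Φ t • K (s - t) := rfl

lemma cv_apply' (Φ : ℝ → ℝ) (K : ℝ → ℂ) (s : ℝ) : cv Φ K s = ∫ t, Φ (s - t) • K t := by
  rw [cv, convolution_eq_swap]; rfl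

lemma enorm_cv_le {Φ : ℝ → ℝ} {K : ℝ → ℂ} (hΦ : Continuous Φ) (hK : AEStronglyMeasurable K volume)
    (s : ℝ) : ‖cv Φ K s‖ₑ ≤ eLpNorm Φ 2 volume * eLpNorm K 2 volume := by
  rw [cv_apply']
  have h := eLpNorm_le_eLpNorm_mul_eLpNorm_of_nnnorm (p := 2) (q := 2) (r := 1) (μ := volume)
    (f := fun t => Φ (s - t)) (g := K) (by fun_prop) hK
    (fun a b => a • b) 1 (by filter_upwards with x; simp)
  have h2 : eLpNorm (fun t => Φ (s - t)) 2 volume = eLpNorm Φ 2 volume :=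
    eLpNorm_comp_measurePreserving hΦ.aestronglyMeasurable
      (Measure.measurePreserving_sub_left volume s)
  rw [h2, eLpNorm_one_eq_lintegral_enorm] at h
  refine (enorm_integral_le_lintegral_enorm _).trans (h.trans (by simp))

lemma tendsto_cv_cocompact {Φ : ℝ → ℝ} {K : ℝ → ℂ} (hΦ : Continuous Φ) (hc : HasCompactSupport Φ)
    (hK : MemLp K 2 volume) : Tendsto (cv Φ K) (cocompact ℝ) (𝓝 0) := by
  have hΦ2 : MemLp Φ 2 volume := hΦ.memLp_of_hasCompactSupport hc
  set C := eLpNorm Φ 2 volume with hC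
  have hCt : C ≠ ⊤ := hΦ2.eLpNorm_lt_top.ne
  rw [tendsto_zero_iff_enorm_tendsto_zero]
  rw [ENNReal.tendsto_nhds_zero]
  intro ε hε
  have hδ : ε / (C + 1) ≠ 0 := by
    simp [ENNReal.div_eq_zero_iff, hε.ne', hCt]
  obtain ⟨K', hK'c, hK'd, hK', hK'm⟩ := hK.exists_hasCompactSupport_eLpNorm_sub_le (by norm_num) hδ
  have hz : ∀ᶠ s in cocompact ℝ, cv Φ K' s = 0 := by
    have : HasCompactSupport (cv Φ K') := hc.convolution _ hK'c
    have h2 := this.isCompact.compl_mem_cocompact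
    filter_upwards [h2] with s hs using image_eq_zero_of_notMem_tsupport hs
  filter_upwards [hz] with s hs
  have e1 := (hc.convolutionExists_left (ContinuousLinearMap.lsmul ℝ ℝ) hΦ
    (hK.locallyIntegrable (by norm_num))) s
  have e2 := (hc.convolutionExists_left (ContinuousLinearMap.lsmul ℝ ℝ) hΦ
    (hK'm.locallyIntegrable (by norm_num))) s
  have : cv Φ K s = cv Φ (K - K') s := by
    have : cv Φ (K - K') s = cv Φ K s - cv Φ K' s := by
      simp only [cv_apply, Pi.sub_apply, smul_sub]
      exact integral_sub e1 e2
    rw [this, hs, sub_zero]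
  rw [this]
  calc _ ≤ _ := enorm_cv_le hΦ (hK.sub hK'm).1 s
    _ ≤ (C + 1) * (ε / (C + 1)) := by gcongr; exact le_self_add
    _ ≤ ε := ENNReal.mul_div_le

lemma lintegral_cv_sub_sq_le {Φ : ℝ → ℝ} {K : ℝ → ℂ} (hΦ : Continuous Φ) (hc : HasCompactSupport Φ)
    (hK : Measurable K) (hK2 : MemLp K 2 volume) {η : ENNReal}
    (hη : ∀ t ∈ tsupport Φ, ∫⁻ s, ‖K (s - t) - K s‖ₑ ^ 2 ≤ η) :
    ∫⁻ s, ‖cv Φ K s - (∫ t, Φ t) • K s‖ₑ ^ 2 ≤ (∫⁻ t, ‖Φ t‖ₑ) ^ 2 * η := by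
  have e1 := (hc.convolutionExists_left (ContinuousLinearMap.lsmul ℝ ℝ) hΦ
    (hK2.locallyIntegrable (by norm_num)))
  have hΦi : Integrable Φ := hΦ.integrable_of_hasCompactSupport hc
  have key : ∀ s, ‖cv Φ K s - (∫ t, Φ t) • K s‖ₑ ^ 2 ≤
      (∫⁻ t, ‖Φ t‖ₑ) * ∫⁻ t, ‖Φ t‖ₑ * ‖K (s - t) - K s‖ₑ ^ 2 := by
    intro s
    have : cv Φ K s - (∫ t, Φ t) • K s = ∫ t, Φ t • (K (s - t) - K s) := by
      simp only [smul_sub]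
      rw [cv_apply, ← integral_smul_const]
      exact (integral_sub (e1 s) (hΦi.smul_const _)).symm
    rw [this]
    refine le_trans ?_ (lintegral_mul_sq_le (by fun_prop) (by fun_prop))
    gcongr
    refine (enorm_integral_le_lintegral_enorm _).trans (le_of_eq ?_)
    simp only [enorm_smul]
  calc _ ≤ ∫⁻ s, (∫⁻ t, ‖Φ t‖ₑ) * ∫⁻ t, ‖Φ t‖ₑ * ‖K (s - t) - K s‖ₑ ^ 2 := lintegral_mono key
    _ = (∫⁻ t, ‖Φ t‖ₑ) * ∫⁻ s, ∫⁻ t, ‖Φ t‖ₑ * ‖K (s - t) - K s‖ₑ ^ 2 := by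
      rw [lintegral_const_mul']
      exact hΦi.2.ne
    _ = (∫⁻ t, ‖Φ t‖ₑ) * ∫⁻ t, ∫⁻ s, ‖Φ t‖ₑ * ‖K (s - t) - K s‖ₑ ^ 2 := by
      rw [lintegral_lintegral_swap]
      fun_prop
    _ ≤ (∫⁻ t, ‖Φ t‖ₑ) * ∫⁻ t, ‖Φ t‖ₑ * η := by
      gcongr with t
      rw [lintegral_const_mul' _ _ (by simp)]
      by_cases ht : t ∈ tsupport Φ
      · gcongr; exact hη t ht
      · simp [image_eq_zero_of_notMem_tsupport ht]
    _ = _ := by rw [lintegral_mul_const'' _ (by fun_prop)]; ring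

lemma exists_translate_lt {K : ℝ → ℂ} (hK2 : MemLp K 2 volume) {η : ENNReal} (hη : η ≠ 0) :
    ∃ ε > 0, ∀ t, |t| ≤ ε → ∫⁻ s, ‖K (s - t) - K s‖ₑ ^ 2 ≤ η ^ 2 := by
  have : Fact ((2:ENNReal) ≠ ⊤) := ⟨by norm_num⟩
  have hcont : Continuous fun t : ℝ =>
    (DomAddAct.mk t +ᵥ hK2.toLp : Lp ℂ 2 (volume : Measure ℝ)) := by fun_prop
  have h0 := hcont.tendsto 0
  rw [EMetric.tendsto_nhds] at h0
  have h1 := h0 η hη.bot_lt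
  rw [Metric.eventually_nhds_iff] at h1
  obtain ⟨ε, hε, h⟩ := h1
  refine ⟨ε / 2, by positivity, fun t ht => ?_⟩
  have h2 := h (y := -t) (by simp; linarith)
  rw [Lp.edist_def, eLpNorm_eq_lintegral_rpow_enorm_toReal (by norm_num) (by norm_num)] at h2
  have h3 : (∫⁻ s, ‖(⇑(DomAddAct.mk (-t) +ᵥ hK2.toLp) - ⇑(DomAddAct.mk (0:ℝ) +ᵥ hK2.toLp)) s‖ₑ
      ^ ENNReal.toReal 2) = ∫⁻ s, ‖K (s - t) - K s‖ₑ ^ 2 := by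
    apply lintegral_congr_ae
    have a1 := DomAddAct.vadd_Lp_ae_eq (DomAddAct.mk (-t)) hK2.toLp
    have a2 := DomAddAct.vadd_Lp_ae_eq (DomAddAct.mk (0:ℝ)) hK2.toLp
    have a3 := (measurePreserving_add_left volume (-t)).quasiMeasurePreserving.ae hK2.coeFn_toLp
    filter_upwards [a1, a2, a3, hK2.coeFn_toLp] with s b1 b2 b3 b4
    simp only [Pi.sub_apply, b1, b2, Equiv.symm_apply_apply, vadd_eq_add, zero_add, b3, b4]
    simp [neg_add_eq_sub]
  rw [h3] at h2
  have h4 := pow_le_pow_left₀ zero_le h2.le 2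
  refine le_trans (le_of_eq ?_) h4
  rw [← ENNReal.rpow_two, ← ENNReal.rpow_mul]; norm_num

lemma eLpNorm_two_eq {α E : Type*} [MeasurableSpace α] {μ : Measure α} [NormedAddCommGroup E]
    (f : α → E) : eLpNorm f 2 μ = (∫⁻ a, ‖f a‖ₑ ^ 2 ∂μ) ^ (1/2:ℝ) := by
  rw [eLpNorm_eq_lintegral_rpow_enorm_toReal (by norm_num) (by norm_num)]
  simp

lemma exists_cv_approx {K : ℝ → ℂ} (hK : Measurable K) (hK2 : MemLp K 2 volume) {δ : ℝ}
    (hδ : 0 < δ) : ∃ ε > 0, ∀ Φ : ℝ → ℝ, Continuous Φ → HasCompactSupport Φ →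
      (tsupport Φ ⊆ Metric.closedBall 0 ε) → (∀ t, 0 ≤ Φ t) →
      MemLp (cv Φ K) 2 volume ∧
        eLpNorm (cv Φ K - (∫ t, Φ t) • K) 2 volume ≤ ENNReal.ofReal ((∫ t, Φ t) * δ) := by
  obtain ⟨ε, hε, h⟩ := exists_translate_lt hK2 (η := ENNReal.ofReal δ) (by simpa using hδ)
  refine ⟨ε, hε, fun Φ hΦ hc hs hpos => ?_⟩
  have h1 := lintegral_cv_sub_sq_le hΦ hc hK hK2 (η := ENNReal.ofReal δ ^ 2)
    (fun t ht => h t (by simpa using hs ht))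
  have hΦi : Integrable Φ := hΦ.integrable_of_hasCompactSupport hc
  have h2 : ∫⁻ t, ‖Φ t‖ₑ = ENNReal.ofReal (∫ t, Φ t) := by
    rw [ofReal_integral_eq_lintegral_ofReal hΦi (ae_of_all _ hpos)]
    exact lintegral_congr fun t => Real.enorm_of_nonneg (hpos t)
  have h3 : eLpNorm (cv Φ K - (∫ t, Φ t) • K) 2 volume ≤ ENNReal.ofReal ((∫ t, Φ t) * δ) := by
    rw [eLpNorm_two_eq]
    rw [h2, ← mul_pow, ← ENNReal.ofReal_mul (integral_nonneg hpos)] at h1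
    calc _ ≤ _ := ENNReal.rpow_le_rpow h1 (by norm_num)
      _ = _ := by rw [← ENNReal.rpow_two, ← ENNReal.rpow_mul]; norm_num
  have hm : AEStronglyMeasurable (cv Φ K) volume :=
    (hc.continuous_convolution_left _ hΦ (hK2.locallyIntegrable (by norm_num))).aestronglyMeasurable
  have h4 : MemLp (cv Φ K - (∫ t, Φ t) • K) 2 volume :=
    ⟨hm.sub (hK2.const_smul (∫ t, Φ t)).1, h3.trans_lt ENNReal.ofReal_lt_top⟩
  refine ⟨?_, h3⟩
  have := h4.add (hK2.const_smul (∫ t, Φ t))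
  simpa using this

lemma eq_zero_of_re_inner_eq_zero {H : Type*} [NormedAddCommGroup H] [InnerProductSpace ℂ H]
    {κ a b : H} {c₁ c₂ : ℝ} (h₁ : 0 < c₁) (h₂ : 0 < c₂) (h : (inner ℂ a b).re = 0)
    (ha : ‖a - c₁ • κ‖ ≤ c₁ * (‖κ‖ / 3)) (hb : ‖b - c₂ • κ‖ ≤ c₂ * (‖κ‖ / 3)) : κ = 0 := by
  have e : (inner ℂ a b : ℂ) = inner ℂ (a - c₁ • κ) b + c₁ * inner ℂ κ (b - c₂ • κ)
      + c₁ * (c₂ * inner ℂ κ κ) := by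
    simp only [inner_sub_left, inner_sub_right]
    have e1 : (inner ℂ (c₁ • κ) b : ℂ) = c₁ * inner ℂ κ b := by
      rw [← Complex.coe_smul, inner_smul_left]; simp
    have e2 : (inner ℂ κ (c₂ • κ) : ℂ) = c₂ * inner ℂ κ κ := by
      rw [← Complex.coe_smul, inner_smul_right]
    rw [e1, e2]; ring
  have hb' : ‖b‖ ≤ c₂ * ‖κ‖ + c₂ * (‖κ‖ / 3) := by
    calc ‖b‖ = ‖c₂ • κ + (b - c₂ • κ)‖ := by congr 1; abel
      _ ≤ _ := (norm_add_le _ _).trans (by rw [norm_smul, Real.norm_of_nonneg h₂.le]; gcongr)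
  rw [inner_self_eq_norm_sq_to_K] at e
  have e3 : (inner ℂ a b : ℂ).re = (inner ℂ (a - c₁ • κ) b : ℂ).re
      + c₁ * (inner ℂ κ (b - c₂ • κ) : ℂ).re + c₁ * (c₂ * ‖κ‖ ^ 2) := by
    rw [e]
    simp only [Complex.add_re, Complex.re_ofReal_mul]
    norm_cast
  have i1 := (Complex.abs_re_le_norm _).trans (norm_inner_le_norm (𝕜 := ℂ) (a - c₁ • κ) b)
  have i2 := (Complex.abs_re_le_norm _).trans (norm_inner_le_norm (𝕜 := ℂ) κ (b - c₂ • κ))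
  have j1 := (neg_le_of_abs_le i1)
  have j2 := (neg_le_of_abs_le i2)
  have k1 : ‖a - c₁ • κ‖ * ‖b‖ ≤ c₁ * (‖κ‖ / 3) * (c₂ * ‖κ‖ + c₂ * (‖κ‖ / 3)) := by gcongr
  have k2 : ‖κ‖ * ‖b - c₂ • κ‖ ≤ ‖κ‖ * (c₂ * (‖κ‖ / 3)) := by gcongr
  by_contra hne
  have hκ : 0 < ‖κ‖ := norm_pos_iff.2 hne
  have : 0 < c₁ * c₂ * ‖κ‖ ^ 2 := by positivity
  nlinarith [mul_le_mul_of_nonneg_left k2 h₁.le, mul_le_mul_of_nonneg_left j2 h₁.le]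

lemma eq_zero_of_integral_conj_mul_eq_zero {K A B : ℝ → ℂ} {c₁ c₂ : ℝ} (h₁ : 0 < c₁) (h₂ : 0 < c₂)
    (hK : MemLp K 2 volume) (hA : MemLp A 2 volume) (hB : MemLp B 2 volume)
    (h : (∫ s, (starRingEnd ℂ) (A s) * B s).re = 0)
    (ha : eLpNorm (A - c₁ • K) 2 volume ≤ ENNReal.ofReal (c₁ * ((eLpNorm K 2 volume).toReal / 3)))
    (hb : eLpNorm (B - c₂ • K) 2 volume ≤ ENNReal.ofReal (c₂ * ((eLpNorm K 2 volume).toReal / 3))) :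
    K =ᵐ[volume] 0 := by
  have hi : (inner ℂ hA.toLp hB.toLp : ℂ) = ∫ s, (starRingEnd ℂ) (A s) * B s := by
    rw [L2.inner_def]
    refine integral_congr_ae ?_
    filter_upwards [hA.coeFn_toLp, hB.coeFn_toLp] with s e1 e2
    rw [e1, e2, RCLike.inner_apply, mul_comm]
  have nrm : ∀ {X : ℝ → ℂ} (hX : MemLp X 2 volume) (c : ℝ), 0 < c →
      eLpNorm (X - c • K) 2 volume ≤ ENNReal.ofReal (c * ((eLpNorm K 2 volume).toReal / 3)) →
      ‖hX.toLp - c • hK.toLp‖ ≤ c * (‖hK.toLp‖ / 3) := by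
    intro X hX c hc hle
    have : hX.toLp - c • hK.toLp = (hX.sub (hK.const_smul c)).toLp := by
      rw [MemLp.toLp_sub hX (hK.const_smul c), MemLp.toLp_const_smul]
    rw [this, Lp.norm_toLp, Lp.norm_toLp]
    exact ENNReal.toReal_le_of_le_ofReal (by positivity) hle
  have := eq_zero_of_re_inner_eq_zero h₁ h₂ (hi ▸ h) (nrm hA c₁ h₁ ha) (nrm hB c₂ h₂ hb)
  exact (hK.coeFn_toLp.symm.trans (by rw [this])).trans (Lp.coeFn_zero _ _ _)

lemma exp_mul_cv (Φ : ℝ → ℝ) (K : ℝ → ℂ) (a s : ℝ) :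
    cv (fun t => Real.exp (a * t) * Φ t) K s =
      (Real.exp (a * s) : ℂ) * cv Φ (fun t => (Real.exp (-(a * t)) : ℂ) * K t) s := by
  rw [cv_apply', cv_apply', ← integral_const_mul]
  congr 1 with t
  rw [mul_sub, Real.exp_sub, Real.exp_neg, div_eq_mul_inv]
  simp only [Complex.real_smul, Complex.ofReal_mul, Complex.ofReal_inv]
  ring

/-- Injectivity of the adjoint of `e^{-2 s} P(D) e^{-2 s} - ζ` in `L²(ℝ)`, `ζ ∈ iℝ \ {0}`, for
`P = (X² - pX + q)(X² + pX + q)` all of whose roots satisfy `|Re z| ≥ 2`. -/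
theorem ae_eq_zero_of_weak_solution {p q : ℝ} {z₁ z₂ : ℂ} (h₁ : 2 ≤ z₁.re) (h₂ : 2 ≤ z₂.re)
    (hp : z₁ + z₂ = p) (hq : z₁ * z₂ = q) {ζ : ℂ} (hζ : ζ.re = 0) (hζ0 : ζ ≠ 0)
    {K : ℝ → ℂ} (hK : Measurable K) (hK2 : MemLp K 2 volume)
    (hw : ∀ ψ : ℝ → ℝ, ContDiff ℝ (⊤ : ℕ∞) ψ → HasCompactSupport ψ →
      ∫ s, K s * (Real.exp (-2 * s) * (iteratedDeriv 4 ψ s + (2 * q - p ^ 2) * iteratedDeriv 2 ψ s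
        + q ^ 2 * ψ s) - ζ * (Real.exp (2 * s) * ψ s)) = 0) : K =ᵐ[volume] 0 := by
  by_cases hn : (eLpNorm K 2 volume).toReal = 0
  · rw [ENNReal.toReal_eq_zero_iff] at hn
    exact (eLpNorm_eq_zero_iff hK2.1 (by norm_num)).1 (hn.resolve_right hK2.2.ne)
  have hn' : 0 < (eLpNorm K 2 volume).toReal / 3 := by
    have : 0 ≤ (eLpNorm K 2 volume).toReal := ENNReal.toReal_nonneg
    positivity
  obtain ⟨ε, hε, happ⟩ := exists_cv_approx hK hK2 hn'
  let θ : ContDiffBump (0:ℝ) := ⟨ε / 2, ε, by linarith, by linarith⟩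
  have hθ : ContDiff ℝ (⊤ : ℕ∞) θ := θ.contDiff
  have hθc : HasCompactSupport θ := θ.hasCompactSupport
  have hθd : ∀ k, ContDiff ℝ (⊤ : ℕ∞) (iteratedDeriv k θ) := fun k => by
    rw [iteratedDeriv_eq_iterate]; exact hθ.iterate_deriv k
  have hθdc : ∀ k, HasCompactSupport (iteratedDeriv k θ) := fun k => by
    induction k with
    | zero => simpa using hθc
    | succ k ih => rw [iteratedDeriv_succ]; exact ih.deriv
  have hKl : LocallyIntegrable K volume := hK2.locallyIntegrable (by norm_num)
  set h : ℝ → ℂ := fun t => (Real.exp (-(2 * t)) : ℂ) * K t with hh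
  have hl : LocallyIntegrable h volume := hKl.continuous_mul (by fun_prop)
  set G : ℕ → ℝ → ℂ := fun k => cv (iteratedDeriv k θ) h with hG
  have hder : ∀ k s, HasDerivAt (G k) (G (k + 1) s) s := fun k s => by
    have := (hθdc k).hasDerivAt_convolution_left (ContinuousLinearMap.lsmul ℝ ℝ)
      ((hθd k).of_le (by simp)) hl s
    rwa [← iteratedDeriv_succ] at this
  set Φ : ℝ → ℕ → ℝ → ℝ := fun a k t => Real.exp (a * t) * iteratedDeriv k θ t with hΦ
  have Φcont : ∀ a k, Continuous (Φ a k) := fun a k => by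
    have := (hθd k).continuous
    simp only [hΦ]; fun_prop
  have Φc : ∀ a k, HasCompactSupport (Φ a k) := fun a k => (hθdc k).mul_left
  have hdecay : ∀ k, Tendsto (fun s => ‖G k s‖ * Real.exp (2 * s)) (cocompact ℝ) (𝓝 0) := fun k => by
    have := (tendsto_cv_cocompact (Φcont 2 k) (Φc 2 k) hK2).norm
    rw [norm_zero] at this
    refine this.congr fun s => ?_
    rw [hΦ, exp_mul_cv, norm_mul, mul_comm, Complex.norm_real, Real.norm_of_nonneg (by positivity)]
  have hA : ∀ s, cv (Φ 2 0) K s = Real.exp (2 * s) * G 0 s := fun s => by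
    rw [hΦ, exp_mul_cv]
  have hF : ∀ s, G 4 s + (2 * q - p ^ 2) * G 2 s + q ^ 2 * G 0 s
      = ζ * (Real.exp (2 * s) * cv (Φ (-2) 0) K s) := fun s => by
    have e0 : ((Real.exp (2 * s) : ℝ) : ℂ) * Real.exp (-2 * s) = 1 := by
      norm_cast; rw [← Real.exp_add]; simp
    rw [hΦ, exp_mul_cv, ← mul_assoc (Real.exp (2 * s) : ℂ), e0, one_mul]
    have hw' := hw (fun t => θ (s - t)) (by fun_prop) (by
      exact hθc.comp_homeomorph (Homeomorph.subLeft s))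
    rw [iteratedDeriv_comp_const_sub, iteratedDeriv_comp_const_sub] at hw'
    have i0 : ∀ k, Integrable (fun t => iteratedDeriv k θ (s - t) • h t) := fun k =>
      (((hθdc k).convolutionExists_left (ContinuousLinearMap.lsmul ℝ ℝ) (hθd k).continuous hl
        s).integrable_swap : _)
    have i1 : Integrable (fun t => iteratedDeriv 0 θ (s - t) •
        ((Real.exp (-(-2 * t)) : ℂ) * K t)) :=
      (((hθdc 0).convolutionExists_left (ContinuousLinearMap.lsmul ℝ ℝ) (hθd 0).continuous
        (hKl.continuous_mul (by fun_prop)) s).integrable_swap : _)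
    simp only [hG, cv_apply', ← integral_const_mul]
    have i2 : Integrable (fun t => iteratedDeriv 4 θ (s - t) • h t
        + (2 * q - p ^ 2 : ℂ) * (iteratedDeriv 2 θ (s - t) • h t)) := (i0 4).add ((i0 2).const_mul _)
    have i3 : Integrable (fun t => iteratedDeriv 4 θ (s - t) • h t
        + (2 * q - p ^ 2 : ℂ) * (iteratedDeriv 2 θ (s - t) • h t)
        + (q ^ 2 : ℂ) * (iteratedDeriv 0 θ (s - t) • h t)) := i2.add ((i0 0).const_mul _)
    rw [← sub_eq_zero, ← integral_add (i0 4) ((i0 2).const_mul _),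
      ← integral_add i2 ((i0 0).const_mul _), ← integral_sub i3 (i1.const_mul _), ← hw']
    congr 1 with t
    simp only [hh, iteratedDeriv_zero, Complex.real_smul, neg_mul, neg_neg]
    push_cast
    norm_num
    ring
  have happ' : ∀ a, MemLp (cv (Φ a 0) K) 2 volume ∧ eLpNorm (cv (Φ a 0) K - (∫ t, Φ a 0 t) • K) 2
      volume ≤ ENNReal.ofReal ((∫ t, Φ a 0 t) * ((eLpNorm K 2 volume).toReal / 3)) := fun a => by
    refine happ _ (Φcont a 0) (Φc a 0) ?_ fun t => by
      simp only [hΦ, iteratedDeriv_zero]; exact mul_nonneg (Real.exp_pos _).le θ.nonneg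
    refine (closure_mono (Function.support_mul_subset_right _ _)).trans ?_
    simp only [iteratedDeriv_zero]
    exact (θ.tsupport_eq).le
  have hpos : ∀ a, 0 < ∫ t, Φ a 0 t := fun a => by
    refine (Φcont a 0).integral_pos_of_hasCompactSupport_nonneg_nonzero (x := 0) (Φc a 0)
      (fun t => ?_) ?_
    · simp only [hΦ, iteratedDeriv_zero]; exact mul_nonneg (Real.exp_pos _).le θ.nonneg
    · simp only [hΦ, iteratedDeriv_zero]
      exact (mul_pos (Real.exp_pos _) (θ.pos_of_mem_ball (by simp [θ, hε]))).ne'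
  have lim := tendsto_integral_im_conj_mul h₁ h₂ hp hq (hder 0) (hder 1) (hder 2) (hder 3)
    ((continuous_iff_continuousAt.2 fun s => (hder 4 s).continuousAt)) (hdecay 0) (hdecay 1)
    (hdecay 2) (hdecay 3) (by
      have := ((tendsto_cv_cocompact (Φcont (-2) 0) (Φc (-2) 0) hK2).norm).const_mul ‖ζ‖
      rw [norm_zero, mul_zero] at this
      refine this.congr fun s => ?_
      have e0 : Real.exp (2 * s) * Real.exp (-2 * s) = 1 := by rw [← Real.exp_add]; simp
      rw [hF, norm_mul, norm_mul, Complex.norm_real, Real.norm_of_nonneg (by positivity)]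
      linear_combination (-‖ζ‖ * ‖cv (Φ (-2) 0) K s‖) * e0)
  have hint : Integrable (fun s => (starRingEnd ℂ) (cv (Φ 2 0) K s) * cv (Φ (-2) 0) K s) :=
    ((happ' 2).1.star).integrable_mul (happ' (-2)).1
  have hζi : ζ = ζ.im * Complex.I := by
    apply Complex.ext <;> simp [hζ]
  have lim2 := intervalIntegral_tendsto_integral (hint.re.const_mul ζ.im) tendsto_neg_atTop_atBot
    tendsto_id
  have heq := tendsto_nhds_unique lim2 (lim.congr fun R => by
    congr 1 with s
    rw [hF, hA, hζi]
    simp [-Complex.ofReal_exp]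
    ring)
  rw [integral_const_mul] at heq
  have him : ζ.im ≠ 0 := fun h0 => hζ0 (by rw [hζi, h0]; simp)
  have heq' := (mul_eq_zero.1 heq).resolve_left him
  refine eq_zero_of_integral_conj_mul_eq_zero (hpos 2) (hpos (-2)) hK2 (happ' 2).1 (happ' (-2)).1 ?_
    (happ' 2).2 (happ' (-2)).2
  rw [← heq']
  exact (integral_re hint).symm

section abstract_criterion

variable {H : Type*} [NormedAddCommGroup H] [InnerProductSpace ℂ H]

lemma norm_sq_add_norm_sq_eq {T : H →ₗ.[ℂ] H}
    (hs : ∀ x y : T.domain, inner ℂ (T x) (y : H) = inner ℂ (x : H) (T y)) {ε : ℂ}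
    (hε : ε.re = 0) (hε1 : ‖ε‖ = 1) (x : T.domain) :
    ‖(x : H)‖ ^ 2 + ‖T x‖ ^ 2 = ‖T x + ε • (x : H)‖ ^ 2 := by
  have h0 : (inner ℂ (T x) (x : H) : ℂ).im = 0 := by
    have := hs x x
    rw [← inner_conj_symm (x : H) (T x)] at this
    exact Complex.conj_eq_iff_im.1 this.symm
  rw [@norm_add_sq ℂ, inner_smul_right, norm_smul, hε1]
  simp only [RCLike.mul_re, RCLike.re_to_complex, RCLike.im_to_complex, hε, h0]
  ring

variable [CompleteSpace H]

lemma LinearPMap.exists_tendsto_of_adjoint {T : H →ₗ.[ℂ] H} (hd : Dense (T.domain : Set H))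
    (hs : ∀ x y : T.domain, inner ℂ (T x) (y : H) = inner ℂ (x : H) (T y))
    (h1 : ∀ w : H, (∀ x : T.domain, inner ℂ w (T x + Complex.I • (x : H)) = 0) → w = 0)
    (h2 : ∀ w : H, (∀ x : T.domain, inner ℂ w (T x - Complex.I • (x : H)) = 0) → w = 0)
    (u : T.adjoint.domain) : ∃ φ : ℕ → T.domain,
      Tendsto (fun k => (φ k : H)) atTop (𝓝 (u : H)) ∧
      Tendsto (fun k => T (φ k)) atTop (𝓝 (T.adjoint u)) := by
  let S : T.domain →ₗ[ℂ] H := T.toFun + Complex.I • T.domain.subtype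
  have hS : ∀ x, S x = T x + Complex.I • (x : H) := fun x => rfl
  have hdense : Dense (LinearMap.range S : Set H) := by
    rw [Submodule.dense_iff_topologicalClosure_eq_top, Submodule.topologicalClosure_eq_top_iff,
      Submodule.eq_bot_iff]
    intro w hw
    refine h1 w fun x => ?_
    rw [← inner_conj_symm, ← hS, (Submodule.mem_orthogonal _ _).1 hw _ ⟨x, rfl⟩, RingHom.map_zero]
  obtain ⟨y, hy, hyl⟩ := mem_closure_iff_seq_limit.1
    (hdense (T.adjoint u + Complex.I • (u : H)))
  choose φ hφ using hy
  have hest : ∀ x : T.domain, ‖(x : H)‖ ^ 2 + ‖T x‖ ^ 2 = ‖S x‖ ^ 2 :=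
    fun x => norm_sq_add_norm_sq_eq hs (by simp) (by simp) x
  have hb1 : ∀ x : T.domain, ‖(x : H)‖ ≤ 1 * ‖S x‖ := fun x => by
    rw [one_mul]
    refine le_of_sq_le_sq ?_ (norm_nonneg _)
    nlinarith [hest x, sq_nonneg ‖T x‖]
  have hb2 : ∀ x : T.domain, ‖T x‖ ≤ 1 * ‖S x‖ := fun x => by
    rw [one_mul]
    refine le_of_sq_le_sq ?_ (norm_nonneg _)
    nlinarith [hest x, sq_nonneg ‖(x : H)‖]
  have hc : CauchySeq fun k => S (φ k) := by
    simp only [hφ]; exact hyl.cauchySeq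
  have cau : ∀ L : T.domain →ₗ[ℂ] H, (∀ x, ‖L x‖ ≤ 1 * ‖S x‖) → CauchySeq fun k => L (φ k) := by
    intro L hL
    rw [Metric.cauchySeq_iff] at hc ⊢
    intro ε hε
    obtain ⟨N, hN⟩ := hc ε hε
    refine ⟨N, fun m hm n hn => lt_of_le_of_lt ?_ (hN m hm n hn)⟩
    have := hL (φ m - φ n)
    rwa [LinearMap.map_sub, LinearMap.map_sub, one_mul, ← dist_eq_norm, ← dist_eq_norm] at this
  obtain ⟨v, hv⟩ := cauchySeq_tendsto_of_complete (cau T.domain.subtype hb1)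
  obtain ⟨v', hv'⟩ := cauchySeq_tendsto_of_complete (cau T.toFun hb2)
  have hsum : v' + Complex.I • v = T.adjoint u + Complex.I • (u : H) := by
    refine tendsto_nhds_unique ?_ hyl
    refine (hv'.add (hv.const_smul Complex.I)).congr fun k => ?_
    rw [← hφ]; rfl
  have huv : (u : H) - v = 0 := by
    refine h2 _ fun x => ?_
    have e1 : inner ℂ (T.adjoint u) (x : H) = inner ℂ (u : H) (T x) :=
      LinearPMap.adjoint_isFormalAdjoint hd u x
    have e2 : inner ℂ v' (x : H) = inner ℂ v (T x) := by
      refine tendsto_nhds_unique (hv'.inner tendsto_const_nhds)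
        ((hv.inner tendsto_const_nhds).congr fun k => ?_)
      exact (hs (φ k) x).symm
    have e3 : T.adjoint u - v' = - (Complex.I • ((u : H) - v)) := by
      rw [smul_sub]
      have := hsum
      rw [← sub_eq_zero] at this ⊢
      rw [← neg_eq_zero, ← this]; abel
    have e4 : inner ℂ ((u : H) - v) (T x) = inner ℂ (T.adjoint u - v') (x : H) := by
      rw [inner_sub_left, inner_sub_left, e1, e2]
    rw [inner_sub_right, e4, e3, inner_neg_left, inner_smul_left, inner_smul_right]
    simp
  rw [sub_eq_zero] at huv
  rw [← huv] at hv hsum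
  exact ⟨φ, hv, by rw [← add_right_cancel hsum]; exact hv'⟩

theorem isSelfAdjoint_adjoint_of_symmetric {T : H →ₗ.[ℂ] H} (hd : Dense (T.domain : Set H))
    (hs : ∀ x y : T.domain, inner ℂ (T x) (y : H) = inner ℂ (x : H) (T y))
    (h1 : ∀ w : H, (∀ x : T.domain, inner ℂ w (T x + Complex.I • (x : H)) = 0) → w = 0)
    (h2 : ∀ w : H, (∀ x : T.domain, inner ℂ w (T x - Complex.I • (x : H)) = 0) → w = 0) :
    IsSelfAdjoint T.adjoint := by
  have hle : T ≤ T.adjoint := LinearPMap.IsFormalAdjoint.le_adjoint hd fun x y => hs x y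
  have hd' : Dense (T.adjoint.domain : Set H) := hd.mono hle.1
  rw [isSelfAdjoint_iff]
  apply le_antisymm
  · refine LinearPMap.IsFormalAdjoint.le_adjoint hd fun x y => ?_
    have := LinearPMap.adjoint_isFormalAdjoint hd' y ⟨x, hle.1 x.2⟩
    rw [← hle.2 (x := x) (y := ⟨x, hle.1 x.2⟩) rfl] at this
    rw [← inner_conj_symm, ← inner_conj_symm (x : H)]
    exact congrArg _ this.symm
  · refine LinearPMap.IsFormalAdjoint.le_adjoint hd' fun u v => ?_
    obtain ⟨φ, hφ, hTφ⟩ := LinearPMap.exists_tendsto_of_adjoint hd hs h1 h2 v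
    refine tendsto_nhds_unique (Tendsto.inner tendsto_const_nhds hφ)
      ((Tendsto.inner tendsto_const_nhds hTφ).congr fun k => ?_)
    exact (LinearPMap.adjoint_isFormalAdjoint hd u (φ k)).symm

/-- If `T*` is self-adjoint then it is symmetric on vectors described by their weak images. -/
theorem inner_eq_inner_of_isSelfAdjoint_adjoint {T : H →ₗ.[ℂ] H} (hd : Dense (T.domain : Set H))
    (hT : IsSelfAdjoint T.adjoint) {u u' v v' : H}
    (hu : ∀ x : T.domain, inner ℂ u' (x : H) = inner ℂ u (T x))
    (hv : ∀ x : T.domain, inner ℂ v' (x : H) = inner ℂ v (T x)) :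
    inner ℂ u' v = inner ℂ u v' := by
  have hu1 : u ∈ T.adjoint.domain := LinearPMap.mem_adjoint_domain_of_exists u ⟨u', hu⟩
  have hv1 : v ∈ T.adjoint.domain := LinearPMap.mem_adjoint_domain_of_exists v ⟨v', hv⟩
  have hu2 : T.adjoint ⟨u, hu1⟩ = u' := LinearPMap.adjoint_apply_eq hd _ hu
  have hv2 : T.adjoint ⟨v, hv1⟩ = v' := LinearPMap.adjoint_apply_eq hd _ hv
  have hd' : Dense (T.adjoint.domain : Set H) := hT.dense_domain
  have h := LinearPMap.adjoint_isFormalAdjoint hd'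
  rw [isSelfAdjoint_iff] at hT
  have hT' : T.adjoint.adjoint = T.adjoint := hT
  rw [hT'] at h
  have := h ⟨u, hu1⟩ ⟨v, hv1⟩
  rwa [hu2, hv2] at this

end abstract_criterion

/-- Membership in `C₀^∞(ℝⁿ \ {0})`. -/
structure IsTest {n : ℕ} (φ : EuclideanSpace ℝ (Fin n) → ℂ) : Prop where
  contDiff : ContDiff ℝ (⊤ : ℕ∞) φ
  compact : HasCompactSupport φ
  zero_notMem : (0 : EuclideanSpace ℝ (Fin n)) ∉ tsupport φ

/-- Smoothness on `ℝⁿ \ {0}`. -/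
def SmoothOff {n : ℕ} (u : EuclideanSpace ℝ (Fin n) → ℂ) : Prop :=
  ContDiffOn ℝ (⊤ : ℕ∞) u {0}ᶜ

/-- The formal differential expression `Δ² + c|x|⁻⁴`. -/
def T2form {n : ℕ} (c : ℝ) (φ : EuclideanSpace ℝ (Fin n) → ℂ) (x : EuclideanSpace ℝ (Fin n)) : ℂ :=
  laplacian (laplacian φ) x + ((c * (‖x‖ ^ 4)⁻¹ : ℝ) : ℂ) * φ x

section

variable {n : ℕ} {φ ψ u v : EuclideanSpace ℝ (Fin n) → ℂ}

lemma SmoothOff.contDiffAt (hu : SmoothOff u) {x : EuclideanSpace ℝ (Fin n)} (hx : x ≠ 0) :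
    ContDiffAt ℝ (⊤ : ℕ∞) u x :=
  ContDiffOn.contDiffAt hu (isOpen_compl_singleton.mem_nhds hx)

lemma SmoothOff.differentiableAt (hu : SmoothOff u) {x : EuclideanSpace ℝ (Fin n)} (hx : x ≠ 0) :
    DifferentiableAt ℝ u x := (hu.contDiffAt hx).differentiableAt (by simp)

lemma SmoothOff.fderiv_apply (hu : SmoothOff u) (v : EuclideanSpace ℝ (Fin n)) :
    SmoothOff (fun x => fderiv ℝ u x v) :=
  (ContDiffOn.fderiv_of_isOpen (m := ((⊤ : ℕ∞) : WithTop ℕ∞)) hu isOpen_compl_singleton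
    (by simp)).clm_apply contDiffOn_const

lemma SmoothOff.add (hu : SmoothOff u) (hv : SmoothOff v) : SmoothOff (u + v) :=
  ContDiffOn.add hu hv

lemma SmoothOff.const_smul (hu : SmoothOff u) (a : ℂ) : SmoothOff (a • u) :=
  ContDiffOn.const_smul a hu

lemma SmoothOff.mul (hu : SmoothOff u) (hv : SmoothOff v) : SmoothOff (fun x => u x * v x) :=
  ContDiffOn.mul hu hv

lemma SmoothOff.conj (hu : SmoothOff u) : SmoothOff (fun x => (starRingEnd ℂ) (u x)) :=
  Complex.conjCLE.contDiff.comp_contDiffOn hu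

lemma SmoothOff.laplacian (hu : SmoothOff u) : SmoothOff (laplacian u) :=
  ContDiffOn.sum fun _ _ => (hu.fderiv_apply _).fderiv_apply _

lemma IsTest.smoothOff (h : IsTest φ) : SmoothOff φ := h.contDiff.contDiffOn

lemma IsTest.ne_zero (h : IsTest φ) {x : EuclideanSpace ℝ (Fin n)} (hx : x ∈ tsupport φ) : x ≠ 0 :=
  fun h0 => h.zero_notMem (h0 ▸ hx)

lemma IsTest.of_smoothOff (hu : SmoothOff u) (hc : HasCompactSupport u)
    (h0 : (0 : EuclideanSpace ℝ (Fin n)) ∉ tsupport u) : IsTest u := by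
  refine ⟨contDiff_iff_contDiffAt.2 fun x => ?_, hc, h0⟩
  by_cases hx : x = 0
  · subst hx
    exact contDiffAt_const.congr_of_eventuallyEq (notMem_tsupport_iff_eventuallyEq.1 h0)
  · exact hu.contDiffAt hx

lemma IsTest.mul_smoothOff (h : IsTest φ) (hu : SmoothOff u) : IsTest (fun x => φ x * u x) :=
  .of_smoothOff (h.smoothOff.mul hu) h.compact.mul_right
    fun h0 => h.zero_notMem (tsupport_mul_subset_left h0)

lemma IsTest.zero : IsTest (0 : EuclideanSpace ℝ (Fin n) → ℂ) :=
  ⟨contDiff_const, .zero, by simp [tsupport]⟩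

lemma IsTest.add (h : IsTest φ) (h' : IsTest ψ) : IsTest (φ + ψ) :=
  ⟨h.contDiff.add h'.contDiff, h.compact.add h'.compact, fun h0 =>
    (tsupport_add φ ψ h0).elim h.zero_notMem h'.zero_notMem⟩

lemma IsTest.const_smul (h : IsTest φ) (a : ℂ) : IsTest (a • φ) :=
  ⟨h.contDiff.const_smul a, h.compact.smul_left, fun h0 =>
    h.zero_notMem (closure_mono (Function.support_const_smul_subset a φ) h0)⟩

lemma IsTest.conj (h : IsTest φ) : IsTest (fun x => (starRingEnd ℂ) (φ x)) :=
  .of_smoothOff h.smoothOff.conj (h.compact.comp_left (g := starRingEnd ℂ) (map_zero _)) fun h0 =>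
    h.zero_notMem (closure_mono (Function.support_comp_subset (map_zero (starRingEnd ℂ)) φ) h0)

lemma IsTest.fderiv_apply (h : IsTest φ) (v : EuclideanSpace ℝ (Fin n)) :
    IsTest (fun x => fderiv ℝ φ x v) :=
  .of_smoothOff (h.smoothOff.fderiv_apply v) (h.compact.fderiv_apply ℝ v) fun h0 =>
    h.zero_notMem (tsupport_fderiv_apply_subset ℝ v h0)

lemma IsTest.sum {ι : Type*} (s : Finset ι) {f : ι → EuclideanSpace ℝ (Fin n) → ℂ}
    (h : ∀ i ∈ s, IsTest (f i)) : IsTest (fun x => ∑ i ∈ s, f i x) := by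
  classical
  induction s using Finset.induction_on with
  | empty => simp only [Finset.sum_empty]; exact IsTest.zero
  | insert a s ha ih =>
    simp only [Finset.sum_insert ha]
    exact (h a (by simp)).add (ih fun i hi => h i (by simp [hi]))

lemma IsTest.laplacian (h : IsTest φ) : IsTest (laplacian φ) :=
  .sum _ fun _ _ => (h.fderiv_apply _).fderiv_apply _

lemma smoothOff_norm_pow (c : ℝ) :
    SmoothOff (fun x : EuclideanSpace ℝ (Fin n) => ((c * (‖x‖ ^ 4)⁻¹ : ℝ) : ℂ)) := by
  refine Complex.ofRealCLM.contDiff.comp_contDiffOn (contDiffOn_const.mul ?_)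
  have : ∀ x : EuclideanSpace ℝ (Fin n), (‖x‖ ^ 4)⁻¹ = ((‖x‖ ^ 2) ^ 2)⁻¹ := fun x => by ring
  simp only [this]
  refine (((contDiff_norm_sq ℝ).pow 2).contDiffOn).inv fun x hx => ?_
  have : x ≠ 0 := hx
  positivity

lemma IsTest.T2form (h : IsTest φ) (c : ℝ) : IsTest (T2form c φ) := by
  refine h.laplacian.laplacian.add ?_
  simpa only [mul_comm] using h.mul_smoothOff (smoothOff_norm_pow c)

lemma SmoothOff.T2form (h : SmoothOff u) (c : ℝ) : SmoothOff (T2form c u) :=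
  h.laplacian.laplacian.add ((smoothOff_norm_pow c).mul h)

lemma IsTest.integrable (h : IsTest φ) : Integrable φ :=
  h.contDiff.continuous.integrable_of_hasCompactSupport h.compact

lemma IsTest.memLp (h : IsTest φ) {p : ENNReal} : MemLp φ p volume :=
  h.contDiff.continuous.memLp_of_hasCompactSupport h.compact

lemma IsTest.integral_fderiv_mul (h : IsTest φ) (hu : SmoothOff u) (v : EuclideanSpace ℝ (Fin n)) :
    ∫ x, fderiv ℝ φ x v * u x = -∫ x, φ x * fderiv ℝ u x v := by
  have := integral_mul_fderiv_eq_neg_fderiv_mul_of_integrable (μ := volume) (f := u) (g := φ) (v := v)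
    (by simpa only [mul_comm] using (h.mul_smoothOff (hu.fderiv_apply v)).integrable)
    (by simpa only [mul_comm] using ((h.fderiv_apply v).mul_smoothOff hu).integrable)
    (by simpa only [mul_comm] using (h.mul_smoothOff hu).integrable)
    (fun x hx => hu.differentiableAt (h.ne_zero hx))
    (fun x _ => h.contDiff.differentiable (by simp) x)
  simpa only [mul_comm] using this

lemma IsTest.integral_laplacian_mul (h : IsTest φ) (hu : SmoothOff u) :
    ∫ x, _root_.laplacian φ x * u x = ∫ x, φ x * _root_.laplacian u x := by
  simp only [_root_.laplacian, Finset.sum_mul, Finset.mul_sum]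
  rw [integral_finsetSum, integral_finsetSum]
  · refine Finset.sum_congr rfl fun i _ => ?_
    rw [(h.fderiv_apply _).integral_fderiv_mul hu, h.integral_fderiv_mul (hu.fderiv_apply _), neg_neg]
  · exact fun i _ => (h.mul_smoothOff ((hu.fderiv_apply _).fderiv_apply _)).integrable
  · exact fun i _ => (((h.fderiv_apply _).fderiv_apply _).mul_smoothOff hu).integrable

lemma IsTest.integral_T2form_mul (h : IsTest φ) (hu : SmoothOff u) (c : ℝ) :
    ∫ x, _root_.T2form c φ x * u x = ∫ x, φ x * _root_.T2form c u x := by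
  simp only [_root_.T2form, add_mul, mul_add]
  rw [integral_add, integral_add]
  · rw [h.laplacian.integral_laplacian_mul hu, h.integral_laplacian_mul hu.laplacian]
    congr 1
    congr 1 with x
    ring
  · exact (h.mul_smoothOff hu.laplacian.laplacian).integrable
  · exact (h.mul_smoothOff ((smoothOff_norm_pow c).mul hu)).integrable
  · exact (h.laplacian.laplacian.mul_smoothOff hu).integrable
  · have := (h.mul_smoothOff ((smoothOff_norm_pow c).mul hu)).integrable
    refine this.congr (ae_of_all _ fun x => ?_)
    ring

lemma laplacian_add (hu : SmoothOff u) (hv : SmoothOff v) {x : EuclideanSpace ℝ (Fin n)}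
    (hx : x ≠ 0) : laplacian (u + v) x = laplacian u x + laplacian v x := by
  simp only [laplacian, ← Finset.sum_add_distrib]
  refine Finset.sum_congr rfl fun i _ => ?_
  have : (fun y => fderiv ℝ (u + v) y (EuclideanSpace.single i 1)) =ᶠ[𝓝 x]
      (fun y => fderiv ℝ u y (EuclideanSpace.single i 1)) +
      fun y => fderiv ℝ v y (EuclideanSpace.single i 1) := by
    filter_upwards [isOpen_compl_singleton.mem_nhds hx] with y hy
    rw [fderiv_add (hu.differentiableAt hy) (hv.differentiableAt hy)]; rfl
  rw [this.fderiv_eq, fderiv_add ((hu.fderiv_apply _).differentiableAt hx)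
    ((hv.fderiv_apply _).differentiableAt hx)]; rfl

lemma laplacian_congr {x : EuclideanSpace ℝ (Fin n)} (h : u =ᶠ[𝓝 x] v) :
    laplacian u x = laplacian v x := by
  simp only [laplacian]
  refine Finset.sum_congr rfl fun i _ => ?_
  have : (fun y => fderiv ℝ u y (EuclideanSpace.single i 1)) =ᶠ[𝓝 x]
      fun y => fderiv ℝ v y (EuclideanSpace.single i 1) := by
    filter_upwards [h.eventuallyEq_nhds] with y hy
    rw [hy.fderiv_eq]
  rw [this.fderiv_eq]

lemma laplacian_const_smul (a : ℂ) : laplacian (a • u) = a • laplacian u := by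
  ext x
  simp only [laplacian, Pi.smul_apply, Finset.smul_sum]
  refine Finset.sum_congr rfl fun i _ => ?_
  have : (fun y => fderiv ℝ (a • u) y (EuclideanSpace.single i 1)) =
      a • (fun y => fderiv ℝ u y (EuclideanSpace.single i 1)) := by
    ext y
    rw [fderiv_const_smul_field]; rfl
  rw [this, fderiv_const_smul_field]; rfl

lemma laplacian_conj :
    laplacian (fun x => (starRingEnd ℂ) (u x)) = fun x => (starRingEnd ℂ) (laplacian u x) := by
  have key : ∀ f : EuclideanSpace ℝ (Fin n) → ℂ, ∀ x w, fderiv ℝ (fun y => (starRingEnd ℂ) (f y)) x w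
      = (starRingEnd ℂ) (fderiv ℝ f x w) := fun f x w => by
    have := Complex.conjCLE.comp_fderiv (f := f) (x := x)
    exact congrArg (fun L => L w) this
  ext x
  simp only [laplacian, key, map_sum]

lemma T2form_conj (c : ℝ) :
    T2form c (fun x => (starRingEnd ℂ) (u x)) = fun x => (starRingEnd ℂ) (T2form c u x) := by
  ext x
  simp only [T2form, laplacian_conj, map_add, map_mul, Complex.conj_ofReal]

lemma T2form_const_smul (c : ℝ) (a : ℂ) : T2form c (a • u) = a • T2form c u := by
  ext x
  simp only [T2form, laplacian_const_smul, Pi.smul_apply, smul_eq_mul]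
  ring

lemma IsTest.laplacian_add (hu : IsTest u) (hv : IsTest v) :
    _root_.laplacian (u + v) = _root_.laplacian u + _root_.laplacian v := by
  ext x
  by_cases hx : x = 0
  · subst hx
    have z : ∀ {f : EuclideanSpace ℝ (Fin n) → ℂ}, IsTest f → f 0 = 0 := fun h =>
      image_eq_zero_of_notMem_tsupport h.zero_notMem
    rw [z (hu.add hv).laplacian, Pi.add_apply, z hu.laplacian, z hv.laplacian, add_zero]
  · exact _root_.laplacian_add hu.smoothOff hv.smoothOff hx

lemma IsTest.T2form_add (hu : IsTest u) (hv : IsTest v) (c : ℝ) :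
    _root_.T2form c (u + v) = _root_.T2form c u + _root_.T2form c v := by
  ext x
  simp only [_root_.T2form, hu.laplacian_add hv, hu.laplacian.laplacian_add hv.laplacian, Pi.add_apply]
  ring

end

section

variable {n : ℕ} {c : ℝ}

lemma mem_graphOf_T2form {p : Lp ℂ 2 (volume : Measure (EuclideanSpace ℝ (Fin n))) ×
      Lp ℂ 2 (volume : Measure (EuclideanSpace ℝ (Fin n)))} :
    p ∈ graphOf n (T2form c) ↔ ∃ φ : EuclideanSpace ℝ (Fin n) → ℂ, IsTest φ ∧
      (p.1 : EuclideanSpace ℝ (Fin n) → ℂ) =ᵐ[volume] φ ∧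
      (p.2 : EuclideanSpace ℝ (Fin n) → ℂ) =ᵐ[volume] T2form c φ := by
  constructor
  · intro hp
    induction hp using Submodule.span_induction with
    | mem p hp =>
      obtain ⟨φ, h1, h2, h3, h4, h5⟩ := hp
      exact ⟨φ, ⟨h1, h2, h3⟩, h4, h5⟩
    | zero =>
      refine ⟨0, .zero, Lp.coeFn_zero _ _ _, ?_⟩
      have := T2form_const_smul (n := n) (u := 0) c 0
      rw [smul_zero, zero_smul] at this
      rw [this]
      exact Lp.coeFn_zero _ _ _
    | add p q _ _ hp hq =>
      obtain ⟨φ, h, h1, h2⟩ := hp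
      obtain ⟨ψ, h', h1', h2'⟩ := hq
      refine ⟨φ + ψ, h.add h', (Lp.coeFn_add _ _).trans (h1.add h1'), ?_⟩
      rw [h.T2form_add h']
      exact (Lp.coeFn_add _ _).trans (h2.add h2')
    | smul a p _ hp =>
      obtain ⟨φ, h, h1, h2⟩ := hp
      refine ⟨a • φ, h.const_smul a, (Lp.coeFn_smul _ _).trans (h1.const_smul a), ?_⟩
      rw [T2form_const_smul]
      exact (Lp.coeFn_smul _ _).trans (h2.const_smul a)
  · rintro ⟨φ, h, h1, h2⟩
    exact Submodule.subset_span ⟨φ, h.1, h.2, h.3, h1, h2⟩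

lemma graphOf_T2form_isGraph (p : Lp ℂ 2 (volume : Measure (EuclideanSpace ℝ (Fin n))) ×
      Lp ℂ 2 (volume : Measure (EuclideanSpace ℝ (Fin n)))) (hp : p ∈ graphOf n (T2form c))
    (h0 : p.1 = 0) : p.2 = 0 := by
  obtain ⟨φ, h, h1, h2⟩ := mem_graphOf_T2form.1 hp
  have hz : φ = 0 := by
    rw [← Continuous.ae_eq_iff_eq volume h.contDiff.continuous continuous_zero]
    refine h1.symm.trans ?_
    rw [h0]; exact Lp.coeFn_zero _ _ _
  have := T2form_const_smul (n := n) (u := 0) c 0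
  rw [smul_zero, zero_smul] at this
  rw [hz, this] at h2
  exact (Lp.eq_zero_iff_ae_eq_zero).2 h2

lemma exists_test_of_domain (x : (T2op n c).domain) : ∃ φ : EuclideanSpace ℝ (Fin n) → ℂ, IsTest φ ∧
    (x : Lp ℂ 2 (volume : Measure (EuclideanSpace ℝ (Fin n)))) =ᵐ[volume] φ ∧
    T2op n c x =ᵐ[volume] T2form c φ :=
  mem_graphOf_T2form.1 (Submodule.mem_graph_toLinearPMap graphOf_T2form_isGraph x)

lemma IsTest.exists_domain {φ : EuclideanSpace ℝ (Fin n) → ℂ} (h : IsTest φ) (c : ℝ) :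
    ∃ x : (T2op n c).domain,
      (x : Lp ℂ 2 (volume : Measure (EuclideanSpace ℝ (Fin n)))) =ᵐ[volume] φ ∧
      T2op n c x =ᵐ[volume] _root_.T2form c φ := by
  have hg : ((h.memLp.toLp φ : Lp ℂ 2 volume), ((h.T2form c).memLp.toLp _ : Lp ℂ 2 volume)) ∈
      graphOf n (_root_.T2form c) :=
    mem_graphOf_T2form.2 ⟨φ, h, h.memLp.coeFn_toLp, (h.T2form c).memLp.coeFn_toLp⟩
  rw [← Submodule.toLinearPMap_graph_eq _ graphOf_T2form_isGraph, LinearPMap.mem_graph_iff] at hg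
  obtain ⟨y, hy1, hy2⟩ := hg
  refine ⟨y, ?_, ?_⟩
  · rw [hy1]; exact h.memLp.coeFn_toLp
  · change ((graphOf n (_root_.T2form c)).toLinearPMap y : EuclideanSpace ℝ (Fin n) → ℂ) =ᵐ[_] _
    rw [hy2]; exact (h.T2form c).memLp.coeFn_toLp

lemma inner_eq_integral_of_ae {x y : Lp ℂ 2 (volume : Measure (EuclideanSpace ℝ (Fin n)))}
    {u v : EuclideanSpace ℝ (Fin n) → ℂ} (hx : x =ᵐ[volume] u) (hy : y =ᵐ[volume] v) :
    inner ℂ x y = ∫ a, v a * (starRingEnd ℂ) (u a) := by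
  rw [L2.inner_def]
  refine integral_congr_ae ?_
  filter_upwards [hx, hy] with a h1 h2
  rw [h1, h2]; rfl

/-- A locally integrable function that annihilates all test functions vanishes a.e. -/
lemma ae_eq_zero_of_forall_isTest (hn : 0 < n) {f : EuclideanSpace ℝ (Fin n) → ℂ}
    (hf : LocallyIntegrableOn f {0}ᶜ)
    (h : ∀ φ : EuclideanSpace ℝ (Fin n) → ℝ, IsTest (fun x => (φ x : ℂ)) → ∫ x, φ x • f x = 0) :
    f =ᵐ[volume] 0 := by
  have : Nonempty (Fin n) := ⟨⟨0, hn⟩⟩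
  have h1 := isOpen_compl_singleton.ae_eq_zero_of_integral_contDiff_smul_eq_zero hf
    fun g hg hgc hgs => h g ⟨Complex.ofRealCLM.contDiff.comp hg,
      hgc.comp_left (g := Complex.ofReal) rfl, fun h0 =>
        hgs (closure_mono (Function.support_comp_subset (g := Complex.ofReal) rfl g) h0) rfl⟩
  have h2 : ∀ᵐ x : EuclideanSpace ℝ (Fin n), x ∈ ({0}ᶜ : Set _) :=
    compl_mem_ae_iff.2 (measure_singleton _)
  filter_upwards [h1, h2] with x a b using a b

lemma T2op_dense (hn : 0 < n) : Dense ((T2op n c).domain : Set (Lp ℂ 2 (volume : Measure (EuclideanSpace ℝ (Fin n))))) := by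
  rw [Submodule.dense_iff_topologicalClosure_eq_top, Submodule.topologicalClosure_eq_top_iff,
      Submodule.eq_bot_iff]
  intro w hw
  rw [Lp.eq_zero_iff_ae_eq_zero]
  refine ae_eq_zero_of_forall_isTest hn
    (((Lp.memLp w).locallyIntegrable (by norm_num)).locallyIntegrableOn _) fun φ hφ => ?_
  obtain ⟨x, hx, -⟩ := hφ.exists_domain c
  have h0 := (Submodule.mem_orthogonal _ _).1 hw _ x.2
  rw [inner_eq_integral_of_ae hx (EventuallyEq.refl _ _)] at h0
  rw [← h0]
  congr 1 with a
  rw [Complex.conj_ofReal, mul_comm, Complex.real_smul]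

lemma T2op_symmetric (x y : (T2op n c).domain) :
    inner ℂ (T2op n c x) (y : Lp ℂ 2 volume) = inner ℂ (x : Lp ℂ 2 volume) (T2op n c y) := by
  obtain ⟨φ, h, h1, h2⟩ := exists_test_of_domain x
  obtain ⟨ψ, h', h1', h2'⟩ := exists_test_of_domain y
  rw [inner_eq_integral_of_ae h2 h1', inner_eq_integral_of_ae h1 h2',
    h'.integral_T2form_mul h.smoothOff.conj, T2form_conj]

/-- Functions smooth off the origin with `u, T u ∈ L²` satisfy the defining relation of `D(T*)`. -/
lemma SmoothOff.inner_T2op {u : EuclideanSpace ℝ (Fin n) → ℂ} (hu : SmoothOff u)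
    (h : MemLp u 2 volume) (h' : MemLp (_root_.T2form c u) 2 volume) (x : (T2op n c).domain) :
    inner ℂ (h'.toLp : Lp ℂ 2 volume) (x : Lp ℂ 2 volume) =
      inner ℂ (h.toLp : Lp ℂ 2 volume) (T2op n c x) := by
  obtain ⟨φ, hφ, h1, h2⟩ := exists_test_of_domain x
  rw [inner_eq_integral_of_ae h'.coeFn_toLp h1, inner_eq_integral_of_ae h.coeFn_toLp h2,
    hφ.integral_T2form_mul hu.conj, T2form_conj]

lemma essentiallySelfAdjoint_T2op_of_injective (hn : 0 < n)
    (H : ∀ ζ : ℂ, ζ.re = 0 → ζ ≠ 0 → ∀ w : EuclideanSpace ℝ (Fin n) → ℂ, MemLp w 2 volume →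
      (∀ φ, IsTest φ → ∫ x, w x * (T2form c φ x - ζ * φ x) = 0) → w =ᵐ[volume] 0) :
    EssentiallySelfAdjoint (T2op n c) := by
  have key : ∀ ζ : ℂ, ζ.re = 0 → ζ ≠ 0 → ∀ w : Lp ℂ 2 (volume : Measure (EuclideanSpace ℝ (Fin n))),
      (∀ x : (T2op n c).domain, inner ℂ w (T2op n c x - ζ • (x : Lp ℂ 2 volume)) = 0) → w = 0 := by
    intro ζ h1 h2 w hw
    have h3 := H ζ h1 h2 (fun x => (starRingEnd ℂ) (w x)) (Lp.memLp w).star fun φ hφ => by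
      obtain ⟨x, hx, hx'⟩ := hφ.exists_domain c
      have h4 := hw x
      rw [inner_eq_integral_of_ae (EventuallyEq.refl _ _)
        ((Lp.coeFn_sub _ _).trans (hx'.sub ((Lp.coeFn_smul _ _).trans (hx.const_smul ζ))))] at h4
      rw [← h4]
      congr 1 with a
      exact mul_comm _ _
    rw [Lp.eq_zero_iff_ae_eq_zero]
    filter_upwards [h3] with a ha
    simpa using ha
  refine ⟨T2op_dense hn, isSelfAdjoint_adjoint_of_symmetric (T2op_dense hn) T2op_symmetric
    (fun w hw => key (-Complex.I) (by simp) (by simp) w fun x => ?_)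
    (fun w hw => key Complex.I (by simp) (by simp) w hw)⟩
  rw [neg_smul, sub_neg_eq_add]
  exact hw x

lemma integral_T2form_eq_of_essentiallySelfAdjoint
    (h : EssentiallySelfAdjoint (T2op n c)) {u v : EuclideanSpace ℝ (Fin n) → ℂ}
    (hu : SmoothOff u) (hv : SmoothOff v) (mu : MemLp u 2 volume) (mv : MemLp v 2 volume)
    (mu' : MemLp (T2form c u) 2 volume) (mv' : MemLp (T2form c v) 2 volume) :
    ∫ x, T2form c u x * v x = ∫ x, u x * T2form c v x := by
  have mc : MemLp (fun x => (starRingEnd ℂ) (u x)) 2 volume := mu.star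
  have mc' : MemLp (T2form c fun x => (starRingEnd ℂ) (u x)) 2 volume := by
    rw [T2form_conj]; exact mu'.star
  have := inner_eq_inner_of_isSelfAdjoint_adjoint h.1 h.2 (hu.conj.inner_T2op mc mc')
    (hv.inner_T2op mv mv')
  rw [inner_eq_integral_of_ae mc'.coeFn_toLp mv.coeFn_toLp,
    inner_eq_integral_of_ae mc.coeFn_toLp mv'.coeFn_toLp, T2form_conj] at this
  simpa only [Complex.conj_conj, mul_comm] using this

end

/-- The function `⟨a, x⟩^k ψ(log |x|)` on `ℝⁿ \ {0}`, extended by zero. -/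
def rad {n : ℕ} (k : ℕ) (a : EuclideanSpace ℝ (Fin n)) (ψ : ℝ → ℂ)
    (x : EuclideanSpace ℝ (Fin n)) : ℂ :=
  if x = 0 then 0 else ((inner ℝ a x : ℝ) : ℂ) ^ k * ψ (Real.log ‖x‖)

/-- The operator `e^{-2 s}(D² + (N-2)D)`. -/
def radialOp (N : ℂ) (ψ : ℝ → ℂ) (s : ℝ) : ℂ :=
  Real.exp (-2 * s) * (deriv (deriv ψ) s + (N - 2) * deriv ψ s)

lemma contDiff_deriv {F : Type*} [NormedAddCommGroup F] [NormedSpace ℝ F] {ψ : ℝ → F}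
    (h : ContDiff ℝ (⊤ : ℕ∞) ψ) : ContDiff ℝ (⊤ : ℕ∞) (deriv ψ) := h.iterate_deriv 1

lemma contDiff_exp_mul (b : ℝ) :
    ContDiff ℝ (⊤ : ℕ∞) fun s : ℝ => ((Real.exp (b * s) : ℝ) : ℂ) := by
  have h : ContDiff ℝ (⊤ : ℕ∞) fun s : ℝ => Real.exp (b * s) := by fun_prop
  exact Complex.ofRealCLM.contDiff.comp h

section

variable {n : ℕ} {k : ℕ} {a x : EuclideanSpace ℝ (Fin n)} {ψ χ : ℝ → ℂ}

lemma rad_of_ne (hx : x ≠ 0) : rad k a ψ x = ((inner ℝ a x : ℝ) : ℂ) ^ k * ψ (Real.log ‖x‖) :=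
  if_neg hx

lemma rad_add : rad k a (ψ + χ) = rad k a ψ + rad k a χ := by
  ext x
  by_cases hx : x = 0
  · simp [rad, hx]
  · simp [rad, hx, mul_add]

lemma contDiff_radialOp (h : ContDiff ℝ (⊤ : ℕ∞) ψ) (N : ℂ) :
    ContDiff ℝ (⊤ : ℕ∞) (radialOp N ψ) := by
  have h1 := contDiff_deriv h
  have h2 := contDiff_deriv h1
  exact (contDiff_exp_mul (-2)).mul (h2.add (contDiff_const.mul h1))

lemma hasCompactSupport_radialOp (h : HasCompactSupport ψ) (N : ℂ) :
    HasCompactSupport (radialOp N ψ) :=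
  (HasCompactSupport.add h.deriv.deriv (h.deriv.mul_left)).mul_left

lemma smoothOff_rad (h : ContDiff ℝ (⊤ : ℕ∞) ψ) : SmoothOff (rad k a ψ) := by
  have h1 : ContDiff ℝ (⊤ : ℕ∞) fun x : EuclideanSpace ℝ (Fin n) => ((inner ℝ a x : ℝ) : ℂ) ^ k :=
    (Complex.ofRealCLM.contDiff.comp (contDiff_const.inner ℝ contDiff_id)).pow k
  have h2 : ContDiffOn ℝ (⊤ : ℕ∞) (fun x : EuclideanSpace ℝ (Fin n) => Real.log ‖x‖) {0}ᶜ :=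
    fun x hx => ((contDiffAt_norm ℝ hx).log (norm_ne_zero_iff.2 hx)).contDiffWithinAt
  exact (h1.contDiffOn.mul (h.comp_contDiffOn h2)).congr fun x hx => rad_of_ne hx

lemma isTest_rad (h : ContDiff ℝ (⊤ : ℕ∞) ψ) (hc : HasCompactSupport ψ) : IsTest (rad k a ψ) := by
  obtain ⟨R, hR⟩ := hc.isCompact.isBounded.subset_closedBall 0
  have hsub : tsupport (rad k a ψ) ⊆ {x | Real.exp (-R) ≤ ‖x‖ ∧ ‖x‖ ≤ Real.exp R} := by
    refine closure_minimal (fun x hx => ?_) ?_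
    · have hx0 : x ≠ 0 := fun h0 => hx (by simp [rad, h0])
      rw [Function.mem_support, rad_of_ne hx0] at hx
      have h1 := hR (subset_tsupport _ (right_ne_zero_of_mul hx))
      rw [mem_closedBall_zero_iff, Real.norm_eq_abs, abs_le] at h1
      have hpos : 0 < ‖x‖ := norm_pos_iff.2 hx0
      exact ⟨(Real.le_log_iff_exp_le hpos).1 h1.1, (Real.log_le_iff_le_exp hpos).1 h1.2⟩
    · exact (isClosed_le continuous_const continuous_norm).inter
        (isClosed_le continuous_norm continuous_const)
  refine .of_smoothOff (smoothOff_rad h) ?_ fun h0 => ?_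
  · refine HasCompactSupport.of_support_subset_isCompact
      (isCompact_closedBall (0 : EuclideanSpace ℝ (Fin n)) (Real.exp R))
      ((subset_tsupport _).trans (hsub.trans fun x hx => ?_))
    simpa using hx.2
  · have := (hsub h0).1
    rw [norm_zero] at this
    exact absurd this (not_le.2 (Real.exp_pos _))

lemma fderiv_rad (h : Differentiable ℝ ψ) (hx : x ≠ 0) (v : EuclideanSpace ℝ (Fin n)) :
    fderiv ℝ (rad k a ψ) x v = k * (inner ℝ a v : ℝ) * rad (k - 1) a ψ x +
      (inner ℝ x v : ℝ) * rad k a (fun s => Real.exp (-2 * s) * deriv ψ s) x := by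
  have hn : ‖x‖ ≠ 0 := norm_ne_zero_iff.2 hx
  have h1 : HasFDerivAt (fun x : EuclideanSpace ℝ (Fin n) => ((inner ℝ a x : ℝ) : ℂ))
      (Complex.ofRealCLM.comp (innerSL ℝ a)) x :=
    Complex.ofRealCLM.hasFDerivAt.comp x (innerSL ℝ a).hasFDerivAt
  have h2 : HasFDerivAt (fun x : EuclideanSpace ℝ (Fin n) => Real.log ‖x‖)
      ((‖x‖ ^ 2)⁻¹ • innerSL ℝ x) x := by
    have e : (fun x : EuclideanSpace ℝ (Fin n) => Real.log ‖x‖) =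
        fun x => (1/2) * Real.log (‖x‖ ^ 2) := by
      ext y; rw [Real.log_pow]; push_cast; ring
    rw [e]
    have := (((hasStrictFDerivAt_norm_sq x).hasFDerivAt).log (by positivity)).const_mul (1/2)
    refine this.congr_fderiv ?_
    ext w
    simp
    ring
  have h3 := ((h (Real.log ‖x‖)).hasDerivAt.hasFDerivAt).comp x h2
  have h4 := (h1.pow k).mul h3
  have h5 : rad k a ψ =ᶠ[𝓝 x] (fun x : EuclideanSpace ℝ (Fin n) => ((inner ℝ a x : ℝ) : ℂ) ^ k) *
      (ψ ∘ fun x => Real.log ‖x‖) := by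
    filter_upwards [isOpen_compl_singleton.mem_nhds hx] with y hy using rad_of_ne hy
  have hexp : Real.exp (-2 * Real.log ‖x‖) = (‖x‖ ^ 2)⁻¹ := by
    rw [show -2 * Real.log ‖x‖ = Real.log ((‖x‖ ^ 2)⁻¹) by
      rw [Real.log_inv, Real.log_pow]; push_cast; ring, Real.exp_log (by positivity)]
  rw [h5.fderiv_eq, h4.fderiv, rad_of_ne hx, rad_of_ne hx, hexp]
  simp
  ring

lemma laplacian_rad (h : ContDiff ℝ (⊤ : ℕ∞) ψ) (hx : x ≠ 0) :
    laplacian (rad k a ψ) x = rad k a (radialOp (n + 2 * k) ψ) x +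
      (k * (k - 1) * ‖a‖ ^ 2 : ℂ) * rad (k - 2) a ψ x := by
  set χ : ℝ → ℂ := fun s => Real.exp (-2 * s) * deriv ψ s with hχ
  have hχs : ContDiff ℝ (⊤ : ℕ∞) χ := 
    (contDiff_exp_mul (-2)).mul (contDiff_deriv h)
  have hχd : ∀ s, deriv χ s = Real.exp (-2 * s) * (deriv (deriv ψ) s - 2 * deriv ψ s) := fun s => by
    have e1 : HasDerivAt (fun s : ℝ => ((Real.exp (-2 * s) : ℝ) : ℂ))
        ((Real.exp (-2 * s) * (-2 * 1) : ℝ) : ℂ) s :=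
      (((hasDerivAt_id s).const_mul (-2)).exp).ofReal_comp
    have e2 := ((contDiff_deriv h).differentiable (by simp) s).hasDerivAt
    rw [show χ = (fun s : ℝ => ((Real.exp (-2 * s) : ℝ) : ℂ)) * deriv ψ from rfl,
      (e1.mul e2).deriv]
    push_cast; ring
  have key : ∀ v, fderiv ℝ (fun y => fderiv ℝ (rad k a ψ) y v) x v =
      (k * (k - 1) * rad (k - 2) a ψ x) * ((inner ℝ a v : ℝ) * (inner ℝ a v : ℝ)) +
      (2 * k * rad (k - 1) a χ x) * ((inner ℝ a v : ℝ) * (inner ℝ x v : ℝ)) +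
      rad k a χ x * (inner ℝ v v : ℝ) +
      rad k a (fun s => Real.exp (-2 * s) * deriv χ s) x * ((inner ℝ x v : ℝ) * (inner ℝ x v : ℝ)) := by
    intro v
    have e1 : (fun y => fderiv ℝ (rad k a ψ) y v) =ᶠ[𝓝 x] fun y =>
        (k * (inner ℝ a v : ℝ) : ℂ) * rad (k - 1) a ψ y + (inner ℝ y v : ℝ) * rad k a χ y := by
      filter_upwards [isOpen_compl_singleton.mem_nhds hx] with y hy using
        fderiv_rad (h.differentiable (by simp)) hy v
    have e2 : HasFDerivAt (fun y : EuclideanSpace ℝ (Fin n) => ((inner ℝ y v : ℝ) : ℂ))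
        (Complex.ofRealCLM.comp (innerSL ℝ v)) x := by
      simp only [real_inner_comm]
      exact Complex.ofRealCLM.hasFDerivAt.comp x (innerSL ℝ v).hasFDerivAt
    have e3 := ((smoothOff_rad (k := k - 1) (a := a) h).differentiableAt hx).hasFDerivAt
    have e4 := ((smoothOff_rad (k := k) (a := a) hχs).differentiableAt hx).hasFDerivAt
    have e5 := (e3.const_mul (k * (inner ℝ a v : ℝ) : ℂ)).add (e2.mul e4)
    rw [e1.fderiv_eq]
    erw [e5.fderiv]
    simp only [add_apply, smul_apply,
      fderiv_rad (h.differentiable (by simp)) hx, fderiv_rad (hχs.differentiable (by simp)) hx,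
      ContinuousLinearMap.comp_apply, innerSL_apply_apply, Complex.ofRealCLM_apply, smul_eq_mul,
      Nat.sub_sub, ← hχ]
    rcases k with _ | k
    · simp; ring
    · push_cast; simp; ring
  have s1 : ∀ y z : EuclideanSpace ℝ (Fin n), ∑ i, ((inner ℝ y (EuclideanSpace.single i (1:ℝ)) : ℝ)
      * (inner ℝ z (EuclideanSpace.single i (1:ℝ)) : ℝ) : ℂ) = (inner ℝ y z : ℝ) := fun y z => by
    simp [PiLp.inner_apply, mul_comm]
  have s2 : ∑ i : Fin n, ((inner ℝ (EuclideanSpace.single i (1:ℝ))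
      (EuclideanSpace.single i (1:ℝ)) : ℝ) : ℂ) = n := by simp
  have hexp : Real.exp (-2 * Real.log ‖x‖) * ‖x‖ ^ 2 = 1 := by
    rw [show -2 * Real.log ‖x‖ = Real.log ((‖x‖ ^ 2)⁻¹) by
      rw [Real.log_inv, Real.log_pow]; push_cast; ring, Real.exp_log (by positivity)]
    field_simp
  have hexp' : (Real.exp (-2 * Real.log ‖x‖) : ℂ) * ‖x‖ ^ 2 = 1 := mod_cast hexp
  have hk : (k : ℂ) * ((inner ℝ a x : ℝ) : ℂ) ^ (k - 1) * (inner ℝ a x : ℝ) =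
      k * ((inner ℝ a x : ℝ) : ℂ) ^ k := by
    rcases k with _ | k
    · simp
    · simp; ring
  simp only [laplacian, key, Finset.sum_add_distrib, ← Finset.mul_sum]
  rw [s1, s1, s1, s2]
  simp only [rad_of_ne hx, real_inner_self_eq_norm_sq, radialOp, hχd]
  simp only [hχ]
  push_cast at hexp' ⊢
  linear_combination (2 * Complex.exp (-2 * Real.log ‖x‖) * deriv ψ (Real.log ‖x‖)) * hk +
    ((inner ℝ a x : ℝ) : ℂ) ^ k * (Complex.exp (-2 * Real.log ‖x‖)) * (deriv (deriv ψ) (Real.log ‖x‖) - 2 * deriv ψ (Real.log ‖x‖)) * hexp'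

end

lemma deriv_exp_mul (α : ℝ) {f : ℝ → ℂ} (hf : Differentiable ℝ f) :
    deriv (fun s => Real.exp (α * s) * f s) = fun s => Real.exp (α * s) * (deriv f s + α * f s) := by
  ext s
  have e1 : HasDerivAt (fun s : ℝ => ((Real.exp (α * s) : ℝ) : ℂ))
      ((Real.exp (α * s) * (α * 1) : ℝ) : ℂ) s :=
    (((hasDerivAt_id s).const_mul α).exp).ofReal_comp
  have := (e1.mul (hf s).hasDerivAt).deriv
  refine this.trans ?_
  push_cast; ring

lemma radialOp_exp_mul (N : ℂ) (α : ℝ) {f : ℝ → ℂ} (hf : ContDiff ℝ (⊤ : ℕ∞) f) :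
    radialOp N (fun s => Real.exp (α * s) * f s) = fun s => Real.exp ((α - 2) * s) *
      (deriv (deriv f) s + (2 * α + N - 2) * deriv f s + (α ^ 2 + (N - 2) * α) * f s) := by
  have hd : Differentiable ℝ f := hf.differentiable (by simp)
  have hd1 : Differentiable ℝ (deriv f) := (contDiff_deriv hf).differentiable (by simp)
  have hd2 : Differentiable ℝ (fun s => deriv f s + α * f s) := hd1.add (hd.const_mul _)
  ext s
  have h2 : deriv (fun s => deriv f s + α * f s) s = deriv (deriv f) s + α * deriv f s :=
    ((hd1 s).hasDerivAt.add ((hd s).hasDerivAt.const_mul (α : ℂ))).deriv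
  simp only [radialOp]
  rw [deriv_exp_mul α hd, deriv_exp_mul α hd2]
  simp only [h2]
  rw [
    show (α - 2) * s = -2 * s + α * s by ring, Real.exp_add]
  push_cast; ring

/-- The fourth order operator `D⁴ + (2A - 4)D² + A²`, conjugate to the square of the
radial operator. -/
def quarticOp (A : ℝ) (g : ℝ → ℂ) (s : ℝ) : ℂ :=
  deriv (deriv (deriv (deriv g))) s + (2 * A - 4) * deriv (deriv g) s + A ^ 2 * g s

lemma radialOp_radialOp_exp_mul {N μ A : ℝ} (hμ : μ = (4 - N) / 2) (hA : A = N * (4 - N) / 4)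
    {g : ℝ → ℂ} (hg : ContDiff ℝ (⊤ : ℕ∞) g) :
    radialOp N (radialOp N (fun s => Real.exp (μ * s) * g s)) =
      fun s => Real.exp ((μ - 4) * s) * quarticOp A g s := by
  have g1 := contDiff_deriv hg
  have g2 := contDiff_deriv g1
  have g3 := contDiff_deriv g2
  have d0 : Differentiable ℝ g := hg.differentiable (by simp)
  have d1 : Differentiable ℝ (deriv g) := g1.differentiable (by simp)
  have d2 : Differentiable ℝ (deriv (deriv g)) := g2.differentiable (by simp)
  have d3 : Differentiable ℝ (deriv (deriv (deriv g))) := g3.differentiable (by simp)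
  have e1 : (2 * μ + N - 2 : ℂ) = 2 := by rw [hμ]; push_cast; ring
  have e2 : (μ ^ 2 + (N - 2) * μ : ℂ) = A := by rw [hμ, hA]; push_cast; ring
  have e3 : (2 * (μ - 2 : ℝ) + N - 2 : ℂ) = -2 := by rw [hμ]; push_cast; ring
  have e4 : ((μ - 2 : ℝ) ^ 2 + (N - 2) * (μ - 2 : ℝ) : ℂ) = A := by rw [hμ, hA]; push_cast; ring
  have hs : ContDiff ℝ (⊤ : ℕ∞) fun s => deriv (deriv g) s + 2 * deriv g s + A * g s :=
    (g2.add (contDiff_const.mul g1)).add (contDiff_const.mul hg)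
  rw [radialOp_exp_mul _ _ hg]
  simp only [e1, e2]
  rw [radialOp_exp_mul _ _ hs]
  simp only [e3, e4]
  have f1 : deriv (fun s => deriv (deriv g) s + 2 * deriv g s + A * g s) =
      fun s => deriv (deriv (deriv g)) s + 2 * deriv (deriv g) s + A * deriv g s := by
    ext s
    exact (((d2 s).hasDerivAt.add ((d1 s).hasDerivAt.const_mul (2 : ℂ))).add
      ((d0 s).hasDerivAt.const_mul (A : ℂ))).deriv
  have f2 : deriv (fun s => deriv (deriv (deriv g)) s + 2 * deriv (deriv g) s + A * deriv g s) =
      fun s => deriv (deriv (deriv (deriv g))) s + 2 * deriv (deriv (deriv g)) s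
        + A * deriv (deriv g) s := by
    ext s
    exact (((d3 s).hasDerivAt.add ((d2 s).hasDerivAt.const_mul (2 : ℂ))).add
      ((d1 s).hasDerivAt.const_mul (A : ℂ))).deriv
  ext s
  rw [f1, f2, quarticOp, show (μ - 2 - 2) * s = (μ - 4) * s by ring]
  ring

lemma radialOp_radialOp_exp_mul_add {N μ A : ℝ} (c : ℝ) (hμ : μ = (4 - N) / 2)
    (hA : A = N * (4 - N) / 4) {g : ℝ → ℂ} (hg : ContDiff ℝ (⊤ : ℕ∞) g) :
    (radialOp N (radialOp N (fun s => Real.exp (μ * s) * g s)) +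
      fun s => c * Real.exp (-4 * s) * (Real.exp (μ * s) * g s)) =
      fun s => Real.exp ((μ - 4) * s) * (quarticOp A g s + c * g s) := by
  rw [radialOp_radialOp_exp_mul hμ hA hg]
  ext s
  simp only [Pi.add_apply]
  rw [show (μ - 4) * s = -4 * s + μ * s by ring, Real.exp_add]
  push_cast; ring

section

variable {n : ℕ} {k : ℕ} {a x : EuclideanSpace ℝ (Fin n)} {ψ g : ℝ → ℂ}

lemma T2form_rad (c : ℝ) (h : ContDiff ℝ (⊤ : ℕ∞) ψ) (hx : x ≠ 0) :
    T2form c (rad k a ψ) x =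
      rad k a (radialOp (n + 2 * k) (radialOp (n + 2 * k) ψ) +
        fun s => c * Real.exp (-4 * s) * ψ s) x +
      (k * (k - 1) * ‖a‖ ^ 2 : ℂ) * (rad (k - 2) a (radialOp (n + 2 * k) ψ +
        radialOp (n + 2 * (k - 2 : ℕ)) ψ) x +
        ((k - 2 : ℕ) * ((k - 2 : ℕ) - 1) * ‖a‖ ^ 2 : ℂ) * rad (k - 4) a ψ x) := by
  have h1 : laplacian (rad k a ψ) =ᶠ[𝓝 x] rad k a (radialOp (n + 2 * k) ψ) +
      (k * (k - 1) * ‖a‖ ^ 2 : ℂ) • rad (k - 2) a ψ := by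
    filter_upwards [isOpen_compl_singleton.mem_nhds hx] with y hy using laplacian_rad h hy
  have hexp : Real.exp (-4 * Real.log ‖x‖) = (‖x‖ ^ 4)⁻¹ := by
    have : (0 : ℝ) < ‖x‖ := norm_pos_iff.2 hx
    rw [show -4 * Real.log ‖x‖ = Real.log ((‖x‖ ^ 4)⁻¹) by
      rw [Real.log_inv, Real.log_pow]; push_cast; ring, Real.exp_log (by positivity)]
  rw [T2form, laplacian_congr h1, laplacian_add (smoothOff_rad (contDiff_radialOp h _))
    ((smoothOff_rad h).const_smul _) hx, laplacian_const_smul, Pi.smul_apply, laplacian_rad h hx,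
    laplacian_rad (contDiff_radialOp h _) hx, rad_add, rad_add]
  simp only [Pi.add_apply, smul_eq_mul, rad_of_ne hx, Nat.sub_sub, hexp]
  push_cast
  ring

lemma T2form_rad_zero_exp_mul (c : ℝ) {A : ℝ} (hA : A = n * (4 - n) / 4)
    (hg : ContDiff ℝ (⊤ : ℕ∞) g) :
    ∀ x ≠ 0, T2form c (rad 0 a fun s => Real.exp ((4 - n) / 2 * s) * g s) x =
      rad 0 a (fun s => Real.exp (((4 - n) / 2 - 4) * s) * (quarticOp A g s + c * g s)) x := by
  intro x hx
  rw [T2form_rad c ((contDiff_exp_mul _).mul hg) hx]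
  have := radialOp_radialOp_exp_mul_add (N := n) c rfl hA hg
  rw [← this]
  simp

end

/-- The measure `|x|^{-n} dx` on `ℝⁿ`. -/
def conicMeasure (n : ℕ) : Measure (EuclideanSpace ℝ (Fin n)) :=
  volume.withDensity fun x => ENNReal.ofReal ((‖x‖ ^ n)⁻¹)

/-- The surface measure of the unit sphere in `ℝⁿ`. -/
def sphereArea (n : ℕ) : ℝ := n * volume.real (Metric.ball (0 : EuclideanSpace ℝ (Fin n)) 1)

lemma sphereArea_pos {n : ℕ} (hn : 0 < n) : 0 < sphereArea n := by
  have : 0 < volume.real (Metric.ball (0 : EuclideanSpace ℝ (Fin n)) 1) :=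
    ENNReal.toReal_pos (Metric.measure_ball_pos _ _ one_pos).ne' measure_ball_lt_top.ne
  rw [sphereArea]; positivity

lemma setLIntegral_norm_Ioc {n : ℕ} (hn : 0 < n) {s t : ℝ} (hst : s < t) :
    ∫⁻ x : EuclideanSpace ℝ (Fin n) in (fun x => Real.log ‖x‖) ⁻¹' (Set.Ioc s t),
      ENNReal.ofReal ((‖x‖ ^ n)⁻¹) = ENNReal.ofReal (sphereArea n * (t - s)) := by
  have : Nonempty (Fin n) := ⟨⟨0, hn⟩⟩
  have : Nontrivial (EuclideanSpace ℝ (Fin n)) := inferInstance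
  set f : ℝ → ℝ := (Set.Ioc (Real.exp s) (Real.exp t)).indicator fun y => (y ^ n)⁻¹ with hf
  have hle : Real.exp s ≤ Real.exp t := (Real.exp_lt_exp.2 hst).le
  have hdim : Module.finrank ℝ (EuclideanSpace ℝ (Fin n)) = n := by simp
  have e1 : (fun y : ℝ => y ^ (n - 1) • f y) =
      (Set.Ioc (Real.exp s) (Real.exp t)).indicator fun y => y⁻¹ := by
    ext y
    by_cases hy : y ∈ Set.Ioc (Real.exp s) (Real.exp t)
    · have h0 : 0 < y := (Real.exp_pos s).trans hy.1
      simp only [hf, Set.indicator_of_mem hy, smul_eq_mul]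
      obtain ⟨m, rfl⟩ : ∃ m, n = m + 1 := ⟨n - 1, by omega⟩
      simp only [Nat.add_sub_cancel]
      field_simp
      ring
    · simp [hf, Set.indicator_of_notMem hy]
  have hsub : Set.Ioc (Real.exp s) (Real.exp t) ⊆ Set.Ioi 0 := fun y hy =>
    (Real.exp_pos s).trans hy.1
  have hcont : IntegrableOn (fun y : ℝ => y⁻¹) (Set.Ioc (Real.exp s) (Real.exp t)) := by
    refine (ContinuousOn.integrableOn_Icc ?_).mono_set Set.Ioc_subset_Icc_self
    exact continuousOn_inv₀.mono fun y hy => ((Real.exp_pos s).trans_le hy.1).ne'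
  have hint : Integrable (fun x : EuclideanSpace ℝ (Fin n) => f ‖x‖) := by
    rw [integrable_fun_norm_addHaar, hdim, e1]
    exact ((integrable_indicator_iff measurableSet_Ioc).2 hcont).integrableOn
  have hval : ∫ x : EuclideanSpace ℝ (Fin n), f ‖x‖ = sphereArea n * (t - s) := by
    rw [integral_fun_norm_addHaar, hdim, e1, setIntegral_indicator measurableSet_Ioc,
      Set.inter_eq_self_of_subset_right hsub, ← intervalIntegral.integral_of_le hle,
      integral_inv_of_pos (Real.exp_pos _) (Real.exp_pos _), ← Real.exp_sub, Real.log_exp,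
      sphereArea]
    simp [mul_assoc]
  rw [← hval, ofReal_integral_eq_lintegral_ofReal hint
    (.of_forall fun x => Set.indicator_nonneg (fun y hy => by
      have := (Real.exp_pos s).trans hy.1; positivity) _),
    ← lintegral_indicator (measurableSet_Ioc.preimage (by fun_prop))]
  refine lintegral_congr_ae ?_
  filter_upwards [compl_mem_ae_iff.2 (measure_singleton (0 : EuclideanSpace ℝ (Fin n)))] with x hx
  have hx0 : 0 < ‖x‖ := norm_pos_iff.2 hx
  have : x ∈ (fun x : EuclideanSpace ℝ (Fin n) => Real.log ‖x‖) ⁻¹' (Set.Ioc s t) ↔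
      ‖x‖ ∈ Set.Ioc (Real.exp s) (Real.exp t) := by
    simp [Real.lt_log_iff_exp_lt hx0, Real.log_le_iff_le_exp hx0]
  by_cases h : ‖x‖ ∈ Set.Ioc (Real.exp s) (Real.exp t)
  · simp only [hf, Set.indicator_of_mem h, Set.indicator_of_mem (this.2 h)]
  · simp only [hf, Set.indicator_of_notMem h, Set.indicator_of_notMem (mt this.1 h),
      ENNReal.ofReal_zero]

lemma measurePreserving_log_norm {n : ℕ} (hn : 0 < n) :
    MeasurePreserving (fun x : EuclideanSpace ℝ (Fin n) => Real.log ‖x‖) (conicMeasure n)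
      (ENNReal.ofReal (sphereArea n) • volume) := by
  have hm : Measurable fun x : EuclideanSpace ℝ (Fin n) => Real.log ‖x‖ := by fun_prop
  refine ⟨hm, ?_⟩
  refine (Measure.ext_of_Ioc' _ _ (fun s t _ => ?_) fun s t hst => ?_).symm
  · simpa using ENNReal.mul_ne_top ENNReal.ofReal_ne_top ENNReal.ofReal_ne_top
  rw [Measure.map_apply hm measurableSet_Ioc, conicMeasure,
    withDensity_apply _ (hm measurableSet_Ioc), setLIntegral_norm_Ioc hn hst]
  simp [ENNReal.ofReal_mul (sphereArea_pos hn).le]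

section

variable {n : ℕ} {E : Type*} [NormedAddCommGroup E] [NormedSpace ℝ E]

lemma integral_conicMeasure (f : EuclideanSpace ℝ (Fin n) → E) :
    ∫ x, f x ∂(conicMeasure n) = ∫ x, (‖x‖ ^ n)⁻¹ • f x := by
  rw [conicMeasure, integral_withDensity_eq_integral_toReal_smul (by fun_prop) (by simp)]
  exact integral_congr_ae (.of_forall fun x => by
    simp only; rw [ENNReal.toReal_ofReal (by positivity)])

lemma integrable_conicMeasure {f : EuclideanSpace ℝ (Fin n) → E} :
    Integrable f (conicMeasure n) ↔ Integrable fun x => (‖x‖ ^ n)⁻¹ • f x := by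
  rw [conicMeasure, integrable_withDensity_iff_integrable_smul' (by fun_prop) (by simp)]
  exact integrable_congr (.of_forall fun x => by
    simp only; rw [ENNReal.toReal_ofReal (by positivity)])

lemma ae_ne_zero (hn : 0 < n) : ∀ᵐ x : EuclideanSpace ℝ (Fin n), x ≠ 0 := by
  have : Nonempty (Fin n) := ⟨⟨0, hn⟩⟩
  exact compl_mem_ae_iff.2 (measure_singleton _)

lemma exp_mul_log_norm {x : EuclideanSpace ℝ (Fin n)} (hx : x ≠ 0) :
    Real.exp (n * Real.log ‖x‖) = ‖x‖ ^ n := by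
  rw [← Real.log_pow, Real.exp_log (by have := norm_pos_iff.2 hx; positivity)]

lemma integral_comp_log_norm (hn : 0 < n) {f : ℝ → E} (hf : Continuous f) :
    ∫ x : EuclideanSpace ℝ (Fin n), f (Real.log ‖x‖) =
      sphereArea n • ∫ s, Real.exp (n * s) • f s := by
  have hc : Continuous fun s => Real.exp (n * s) • f s := by fun_prop
  have h := integral_map (μ := conicMeasure n) (measurePreserving_log_norm hn).measurable.aemeasurable
    (hc.stronglyMeasurable.aestronglyMeasurable)
  rw [(measurePreserving_log_norm hn).map_eq, integral_smul_measure,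
    ENNReal.toReal_ofReal (sphereArea_pos hn).le, integral_conicMeasure] at h
  rw [h]
  refine integral_congr_ae ?_
  filter_upwards [ae_ne_zero hn] with x hx
  have := norm_pos_iff.2 hx
  rw [exp_mul_log_norm hx, smul_smul, inv_mul_cancel₀ (by positivity), one_smul]

lemma integrable_comp_log_norm (hn : 0 < n) {f : ℝ → E}
    (hi : Integrable fun s => Real.exp (n * s) • f s) :
    Integrable fun x : EuclideanSpace ℝ (Fin n) => f (Real.log ‖x‖) := by
  have h := (measurePreserving_log_norm hn).integrable_comp_of_integrable
    (hi.smul_measure ENNReal.ofReal_ne_top)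
  rw [integrable_conicMeasure] at h
  refine h.congr ?_
  filter_upwards [ae_ne_zero hn] with x hx
  have := norm_pos_iff.2 hx
  simp only [Function.comp]
  rw [exp_mul_log_norm hx, smul_smul, inv_mul_cancel₀ (by positivity), one_smul]

end

lemma exists_radial_profile {n : ℕ} (hn : 0 < n) (k : ℕ) (a : EuclideanSpace ℝ (Fin n))
    {w : EuclideanSpace ℝ (Fin n) → ℂ} (hw : MemLp w 2 volume) :
    ∃ K : ℝ → ℂ, Measurable K ∧ MemLp K 2 volume ∧ ∀ ψ : ℝ → ℂ, Continuous ψ →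
      HasCompactSupport ψ →
      ∫ x, w x * rad k a ψ x = ∫ s, K s * (Real.exp ((n / 2 + k) * s) * ψ s) := by
  set ω := ENNReal.ofReal (sphereArea n) with hω
  have hω0 : ω ≠ 0 := by simpa [hω] using sphereArea_pos hn
  have hωt : ω ≠ ⊤ := ENNReal.ofReal_ne_top
  have hmp := measurePreserving_log_norm hn
  set r : EuclideanSpace ℝ (Fin n) → ℝ := fun x => Real.exp (n / 2 * Real.log ‖x‖) with hr
  set b : EuclideanSpace ℝ (Fin n) → ℝ := fun x => inner ℝ a x * Real.exp (-Real.log ‖x‖) with hb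
  have hrm : Measurable r := by fun_prop
  have hbm : Measurable b := by
    have : Measurable fun x : EuclideanSpace ℝ (Fin n) => (inner ℝ a x : ℝ) :=
      (continuous_const.inner continuous_id).measurable
    fun_prop
  have hr2 : ∀ x ≠ 0, r x ^ 2 = ‖x‖ ^ n := fun x hx => by
    rw [← exp_mul_log_norm hx, hr, ← Real.exp_nat_mul]
    congr 1; push_cast; ring
  have hble : ∀ x ≠ 0, |b x| ≤ ‖a‖ := fun x hx => by
    have h0 := norm_pos_iff.2 hx
    rw [hb]
    simp only [abs_mul, Real.exp_neg, Real.exp_log h0]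
    rw [abs_of_pos (inv_pos.2 h0), mul_inv_le_iff₀ h0]
    exact abs_real_inner_le_norm a x
  set V : EuclideanSpace ℝ (Fin n) → ℂ := fun x => star (w x) * ((r x * b x ^ k : ℝ) : ℂ) with hV
  have hVm : AEStronglyMeasurable V volume :=
    hw.aestronglyMeasurable.star.mul (by fun_prop : Measurable fun x =>
      ((r x * b x ^ k : ℝ) : ℂ)).aestronglyMeasurable
  have hVc : AEStronglyMeasurable V (conicMeasure n) :=
    hVm.mono_ac (withDensity_absolutelyContinuous _ _)
  have hVn : MemLp V 2 (conicMeasure n) := by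
    rw [memLp_two_iff_integrable_sq_norm hVc,
      integrable_conicMeasure]
    have hw2 := (memLp_two_iff_integrable_sq_norm hw.aestronglyMeasurable).1 hw
    refine (hw2.mul_const ((‖a‖ ^ k) ^ 2)).mono' ?_ ?_
    · have : AEStronglyMeasurable (fun x => ‖V x‖ ^ 2) volume := hVm.norm.pow 2
      exact ((by fun_prop : Measurable fun x : EuclideanSpace ℝ (Fin n) =>
        (‖x‖ ^ n)⁻¹).aestronglyMeasurable).smul this
    · filter_upwards [ae_ne_zero hn] with x hx
      have h0 := norm_pos_iff.2 hx
      have e : ‖V x‖ ^ 2 = ‖x‖ ^ n * (‖w x‖ ^ 2 * (|b x| ^ k) ^ 2) := by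
        rw [← hr2 x hx, hV]
        simp only [norm_mul, norm_star, Complex.norm_real, Real.norm_eq_abs, abs_pow,
          mul_pow, sq_abs]
        ring
      rw [e, smul_eq_mul, inv_mul_cancel_left₀ (by positivity), Real.norm_of_nonneg (by positivity)]
      gcongr
      exact hble x hx
  set T := (Lp.compMeasurePreservingₗᵢ (E := ℂ) (p := 2) ℂ _ hmp).toContinuousLinearMap with hT
  set K' := T.adjoint (hVn.toLp V) with hK'
  have hK'm : Measurable (K' : ℝ → ℂ) := (Lp.stronglyMeasurable K').measurable
  have hK'L : MemLp (K' : ℝ → ℂ) 2 volume := by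
    have := (Lp.memLp K').smul_measure (ENNReal.inv_ne_top.2 hω0)
    rwa [smul_smul, ENNReal.inv_mul_cancel hω0 hωt, one_smul] at this
  refine ⟨fun s => sphereArea n * star (K' s), ?_, ?_, fun ψ hψ hc => ?_⟩
  · exact measurable_const.mul (Complex.continuous_conj.measurable.comp hK'm)
  · exact hK'L.star.const_mul _
  · set h : ℝ → ℂ := fun s => Real.exp ((n / 2 + k) * s) * ψ s with hh
    have hhc : Continuous h := by fun_prop
    have hhs : HasCompactSupport h := hc.mul_left
    have hhL : MemLp h 2 (ω • volume) :=
      (hhc.memLp_of_hasCompactSupport hhs).smul_measure hωt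
    have key := T.adjoint_inner_left (hhL.toLp h) (hVn.toLp V)
    rw [← hK', L2.inner_def, L2.inner_def] at key
    have e1 : ∫ s, inner ℂ ((K' : ℝ → ℂ) s) ((hhL.toLp h : ℝ → ℂ) s) ∂(ω • volume) =
        ∫ s, (sphereArea n * star (K' s)) * h s := by
      have hωr : ω.toReal = sphereArea n := ENNReal.toReal_ofReal (sphereArea_pos hn).le
      rw [integral_smul_measure, hωr, ← integral_smul]
      have hco : (hhL.toLp h : ℝ → ℂ) =ᵐ[volume] h :=
        (Measure.ae_ennreal_smul_measure_iff hω0).1 hhL.coeFn_toLp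
      refine integral_congr_ae ?_
      filter_upwards [hco] with s hs
      rw [hs, RCLike.inner_apply]
      simp
      ring
    have e2 : ∫ x, inner ℂ ((hVn.toLp V : EuclideanSpace ℝ (Fin n) → ℂ) x)
        ((T (hhL.toLp h) : EuclideanSpace ℝ (Fin n) → ℂ) x) ∂(conicMeasure n) =
        ∫ x, w x * rad k a ψ x := by
      have hco : (T (hhL.toLp h) : EuclideanSpace ℝ (Fin n) → ℂ) =ᵐ[conicMeasure n]
          fun x => h (Real.log ‖x‖) := (hhL.comp_measurePreserving hmp).coeFn_toLp
      have : ∫ x, inner ℂ ((hVn.toLp V : EuclideanSpace ℝ (Fin n) → ℂ) x)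
        ((T (hhL.toLp h) : EuclideanSpace ℝ (Fin n) → ℂ) x) ∂(conicMeasure n) =
        ∫ x, star (V x) * h (Real.log ‖x‖) ∂(conicMeasure n) := by
        refine integral_congr_ae ?_
        filter_upwards [hco, hVn.coeFn_toLp] with x hx hx'
        rw [hx, hx', RCLike.inner_apply, mul_comm]
        rfl
      rw [this, integral_conicMeasure]
      refine integral_congr_ae ?_
      filter_upwards [ae_ne_zero hn] with x hx
      have h0 := norm_pos_iff.2 hx
      have e3 : (‖x‖ ^ n)⁻¹ * (r x * b x ^ k * Real.exp ((n / 2 + k) * Real.log ‖x‖)) =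
          (inner ℝ a x) ^ k := by
        rw [← hr2 x hx]
        have h1 : Real.exp ((n / 2 + k) * Real.log ‖x‖) = r x * Real.exp (Real.log ‖x‖) ^ k := by
          rw [hr, add_mul, Real.exp_add, Real.exp_nat_mul]
        have h2 : 0 < r x := Real.exp_pos _
        rw [h1, hb]
        simp only [mul_pow, Real.exp_neg, Real.exp_log h0, inv_pow]
        field_simp
      rw [rad_of_ne hx, hV, hh, ← Complex.ofReal_pow, ← e3]
      simp
      ring
    rw [← e1, key, e2]

lemma exists_quadratic_roots {p q : ℝ} (hp : 4 ≤ p) (hq : 2 * p - 4 ≤ q) :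
    ∃ z₁ z₂ : ℂ, 2 ≤ z₁.re ∧ 2 ≤ z₂.re ∧ z₁ + z₂ = p ∧ z₁ * z₂ = q := by
  rcases le_total 0 (p ^ 2 - 4 * q) with h | h
  · have hs := Real.sq_sqrt h
    have h0 := Real.sqrt_nonneg (p ^ 2 - 4 * q)
    have hle : √(p ^ 2 - 4 * q) ≤ p - 4 := Real.sqrt_le_iff.2 ⟨by linarith, by nlinarith⟩
    refine ⟨((p + √(p ^ 2 - 4 * q)) / 2 : ℝ), ((p - √(p ^ 2 - 4 * q)) / 2 : ℝ), ?_, ?_, ?_, ?_⟩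
    · rw [Complex.ofReal_re]; linarith
    · rw [Complex.ofReal_re]; linarith
    · norm_cast; ring
    · norm_cast; linear_combination -hs / 4
  · have h' : 0 ≤ 4 * q - p ^ 2 := by linarith
    have hs := Real.sq_sqrt h'
    refine ⟨⟨p / 2, √(4 * q - p ^ 2) / 2⟩, ⟨p / 2, -(√(4 * q - p ^ 2) / 2)⟩, ?_, ?_, ?_, ?_⟩
    · simp only; linarith
    · simp only; linarith
    · apply Complex.ext <;> simp
    · apply Complex.ext
      · simp only [Complex.mul_re, Complex.ofReal_re]; linear_combination hs / 4
      · simp only [Complex.mul_im, Complex.ofReal_im]; ring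

/-- The factorisation of `(z² + A)² - 4z² + c` used for the sufficiency of the threshold. -/
lemma exists_factorization {A c : ℝ} (h1 : -A ^ 2 - 8 * A ≤ c) (h2 : A ≤ -6 ∨ 36 + 12 * A ≤ c) :
    ∃ (p q : ℝ) (z₁ z₂ : ℂ), 2 ≤ z₁.re ∧ 2 ≤ z₂.re ∧ z₁ + z₂ = p ∧ z₁ * z₂ = q ∧
      2 * q - p ^ 2 = 2 * A - 4 ∧ q ^ 2 = A ^ 2 + c := by
  have hnn : 0 ≤ A ^ 2 + c := by
    rcases h2 with h | h
    · linarith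
    · nlinarith [sq_nonneg (A + 6)]
  set q := √(A ^ 2 + c) with hq
  have hq2 : q ^ 2 = A ^ 2 + c := Real.sq_sqrt hnn
  have hq0 : 0 ≤ q := Real.sqrt_nonneg _
  have hqA : A + 6 ≤ q := by
    rcases h2 with h | h
    · linarith
    · exact Real.le_sqrt_of_sq_le (by nlinarith)
  have hnn2 : 0 ≤ 2 * q + 4 - 2 * A := by linarith
  set p := √(2 * q + 4 - 2 * A) with hp
  have hp2 : p ^ 2 = 2 * q + 4 - 2 * A := Real.sq_sqrt hnn2
  have hp4 : 4 ≤ p := Real.le_sqrt_of_sq_le (by linarith)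
  have hpq : 2 * p - 4 ≤ q := by
    have : 2 * p ≤ q + 4 := abs_le_of_sq_le_sq' (by nlinarith) (by linarith) |>.2
    linarith
  obtain ⟨z₁, z₂, a, b, e, f⟩ := exists_quadratic_roots hp4 hpq
  exact ⟨p, q, z₁, z₂, a, b, e, f, by rw [hp2]; ring, hq2⟩

lemma threshold_sector {n : ℕ} (hn : 2 ≤ n) {c : ℝ}
    (h₁ : n ≤ 5 → 3 * ((n : ℝ) + 2) * (6 - n) ≤ c)
    (h₂ : 6 ≤ n → -((n : ℝ) * (n + 4) * (n - 4) * (n - 8)) / 16 ≤ c) (k : ℕ) {N A : ℝ}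
    (hN : N = n + 2 * k) (hA : A = N * (4 - N) / 4) :
    -A ^ 2 - 8 * A ≤ c ∧ (A ≤ -6 ∨ 36 + 12 * A ≤ c) := by
  have hn' : (2 : ℝ) ≤ n := mod_cast hn
  have hk : (0 : ℝ) ≤ k := k.cast_nonneg
  set a : ℝ := n * (4 - n) / 4 with ha
  have hle : A ≤ a := by rw [hA, ha, hN]; nlinarith
  rcases le_or_gt n 5 with h | h
  · have hc : 36 + 12 * a ≤ c := by
      refine le_trans (le_of_eq ?_) (h₁ h)
      rw [ha]; ring
    have h5 : (n : ℝ) ≤ 5 := mod_cast h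
    have : -5 / 4 ≤ a := by rw [ha]; nlinarith
    exact ⟨by nlinarith [sq_nonneg (A + 4)], Or.inr (by linarith)⟩
  · have h6 : 6 ≤ n := h
    have hc : -a ^ 2 - 8 * a ≤ c := by
      refine le_trans (le_of_eq ?_) (h₂ h6)
      rw [ha]; ring
    have key : -A ^ 2 - 8 * A ≤ -a ^ 2 - 8 * a := by
      rcases Nat.eq_zero_or_pos k with rfl | hkpos
      · have : A = a := by rw [hA, ha, hN]; simp
        rw [this]
      · have hk1 : (1 : ℝ) ≤ k := mod_cast hkpos
        have h6' : (6 : ℝ) ≤ n := mod_cast h6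
        have hA8 : A ≤ -8 := by rw [hA, hN]; nlinarith
        rcases le_or_gt n 6 with h66 | h7
        · have : n = 6 := by omega
          have : a = -3 := by rw [ha, this]; norm_num
          rw [this]; nlinarith
        · have h7' : (7 : ℝ) ≤ n := mod_cast h7
          have : a ≤ -4 := by rw [ha]; nlinarith
          nlinarith
    have hA3 : A ≤ -3 := by
      have h6' : (6 : ℝ) ≤ n := mod_cast h6
      have : a ≤ -3 := by rw [ha]; nlinarith
      linarith
    refine ⟨key.trans hc, ?_⟩
    rcases le_or_gt A (-6) with h | h
    · exact Or.inl h
    · exact Or.inr (by nlinarith)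

lemma deriv_ofReal_comp {f : ℝ → ℝ} (hf : Differentiable ℝ f) :
    deriv (fun s => (f s : ℂ)) = fun s => ((deriv f s : ℝ) : ℂ) := by
  ext s
  exact ((hf s).hasDerivAt.ofReal_comp).deriv

lemma quarticOp_ofReal (A : ℝ) {f : ℝ → ℝ} (hf : ContDiff ℝ (⊤ : ℕ∞) f) (s : ℝ) :
    quarticOp A (fun s => (f s : ℂ)) s =
      iteratedDeriv 4 f s + (2 * A - 4) * iteratedDeriv 2 f s + A ^ 2 * f s := by
  have g1 := contDiff_deriv hf
  have g2 := contDiff_deriv g1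
  have g3 := contDiff_deriv g2
  simp only [quarticOp, deriv_ofReal_comp (hf.differentiable (by simp)),
    deriv_ofReal_comp (g1.differentiable (by simp)),
    deriv_ofReal_comp (g2.differentiable (by simp)),
    deriv_ofReal_comp (g3.differentiable (by simp)), iteratedDeriv_succ, iteratedDeriv_zero]

section

variable {n : ℕ} {c : ℝ} {ζ : ℂ} {w : EuclideanSpace ℝ (Fin n) → ℂ}

lemma integral_mul_rad_eq_zero (hn : 2 ≤ n)
    (h₁ : n ≤ 5 → 3 * ((n : ℝ) + 2) * (6 - n) ≤ c)
    (h₂ : 6 ≤ n → -((n : ℝ) * (n + 4) * (n - 4) * (n - 8)) / 16 ≤ c)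
    (hζ : ζ.re = 0) (hζ0 : ζ ≠ 0) (hw : MemLp w 2 volume)
    (hweak : ∀ φ, IsTest φ → ∫ x, w x * (T2form c φ x - ζ * φ x) = 0)
    (a : EuclideanSpace ℝ (Fin n)) (k : ℕ) : ∀ ψ : ℝ → ℂ, ContDiff ℝ (⊤ : ℕ∞) ψ →
      HasCompactSupport ψ → ∫ x, w x * rad k a ψ x = 0 := by
  have hn0 : 0 < n := by omega
  induction k using Nat.strong_induction_on with
  | _ k ih =>
  have hint : ∀ φ, IsTest φ → Integrable fun x => w x * φ x := fun φ hφ =>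
    hw.integrable_mul (q := 2) hφ.memLp
  obtain ⟨K, hKm, hK2, hK⟩ := exists_radial_profile hn0 k a hw
  set N : ℝ := n + 2 * k with hN
  set A : ℝ := N * (4 - N) / 4 with hA
  obtain ⟨hA1, hA2⟩ := threshold_sector hn h₁ h₂ k hN hA
  obtain ⟨p, q, z₁, z₂, hz₁, hz₂, hp, hq, hpq, hq2⟩ := exists_factorization hA1 hA2
  have hK0 : K =ᵐ[volume] 0 := by
    refine ae_eq_zero_of_weak_solution hz₁ hz₂ hp hq hζ hζ0 hKm hK2 fun g hg hgc => ?_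
    set G : ℝ → ℂ := fun s => g s with hG
    have hGs : ContDiff ℝ (⊤ : ℕ∞) G := Complex.ofRealCLM.contDiff.comp hg
    have hGc : HasCompactSupport G := hgc.comp_left (g := fun y : ℝ => (y : ℂ)) (by simp)
    set ψ : ℝ → ℂ := fun s => Real.exp ((4 - N) / 2 * s) * G s with hψ
    have hψs : ContDiff ℝ (⊤ : ℕ∞) ψ := (contDiff_exp_mul _).mul hGs
    have hψc : HasCompactSupport ψ := hGc.mul_left
    have hφ : IsTest (rad k a ψ) := isTest_rad hψs hψc
    have hmain : (radialOp N (radialOp N ψ) + fun s => c * Real.exp (-4 * s) * ψ s) =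
        fun s => Real.exp (((4 - N) / 2 - 4) * s) * (quarticOp A G s + c * G s) :=
      radialOp_radialOp_exp_mul_add c rfl hA hGs
    set M := fun s => Real.exp (((4 - N) / 2 - 4) * s) * (quarticOp A G s + c * G s) with hM
    have hMs : ContDiff ℝ (⊤ : ℕ∞) M := by
      rw [← hmain]
      exact (contDiff_radialOp (contDiff_radialOp hψs _) _).add
        ((contDiff_const.mul (contDiff_exp_mul _)).mul hψs)
    have hMc : HasCompactSupport M := by
      rw [← hmain]
      exact (hasCompactSupport_radialOp (hasCompactSupport_radialOp hψc _) _).add hψc.mul_left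
    set χ := radialOp (n + 2 * k) ψ + radialOp (n + 2 * (k - 2 : ℕ)) ψ with hχ
    have hχs : ContDiff ℝ (⊤ : ℕ∞) χ := (contDiff_radialOp hψs _).add (contDiff_radialOp hψs _)
    have hχc : HasCompactSupport χ :=
      (hasCompactSupport_radialOp hψc _).add (hasCompactSupport_radialOp hψc _)
    set C : ℂ := k * (k - 1) * ‖a‖ ^ 2 with hC
    set C' : ℂ := (k - 2 : ℕ) * ((k - 2 : ℕ) - 1) * ‖a‖ ^ 2 with hC'
    have hlow : ∀ j, 2 ≤ j → ∀ f : ℝ → ℂ, ContDiff ℝ (⊤ : ℕ∞) f → HasCompactSupport f →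
        C * ∫ x, w x * rad (k - j) a f x = 0 := fun j hj f hf hfc => by
      rcases lt_or_ge k 2 with h | h
      · have : C = 0 := by
          rw [hC]
          interval_cases k <;> simp
        rw [this, zero_mul]
      · rw [ih (k - j) (by omega) f hf hfc, mul_zero]
    have i1 := hint _ (isTest_rad (k := k) (a := a) hMs hMc)
    have i2 := hint _ (isTest_rad (k := k - 2) (a := a) hχs hχc)
    have i3 := hint _ (isTest_rad (k := k - 4) (a := a) hψs hψc)
    have i4 := hint _ hφ
    have hexp : ∫ x, w x * (T2form c (rad k a ψ) x - ζ * rad k a ψ x) =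
        (∫ x, w x * rad k a M x) + (C * ∫ x, w x * rad (k - 2) a χ x) +
          C' * (C * ∫ x, w x * rad (k - 4) a ψ x) - ζ * ∫ x, w x * rad k a ψ x := by
      have j2 := i2.const_mul C
      have j3 := (i3.const_mul C).const_mul C'
      have j4 := i4.const_mul ζ
      have j12 : Integrable fun x => w x * rad k a M x + C * (w x * rad (k - 2) a χ x) :=
        i1.add j2
      have j123 : Integrable fun x => w x * rad k a M x + C * (w x * rad (k - 2) a χ x) +
          C' * (C * (w x * rad (k - 4) a ψ x)) := j12.add j3
      rw [← integral_const_mul, ← integral_const_mul, ← integral_const_mul, ← integral_const_mul,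
        ← integral_add i1 j2, ← integral_add j12 j3, ← integral_sub j123 j4]
      refine integral_congr_ae ?_
      filter_upwards [ae_ne_zero hn0] with x hx
      have := T2form_rad (k := k) (a := a) c hψs hx
      rw [show (n + 2 * k : ℂ) = (N : ℂ) by rw [hN]; push_cast; rfl, hmain] at this
      rw [this, ← hC, ← hC', hχ, show (n + 2 * k : ℂ) = (N : ℂ) by rw [hN]; push_cast; rfl]
      ring
    rw [hweak _ hφ, hlow 2 le_rfl χ hχs hχc, hlow 4 (by norm_num) ψ hψs hψc,
      hK M hMs.continuous hMc, hK ψ hψs.continuous hψc] at hexp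
    have j1 : Integrable fun s => K s * (Real.exp ((n / 2 + k) * s) * M s) :=
      hK2.integrable_mul (q := 2) ((by fun_prop : Continuous fun s =>
        (Real.exp ((n / 2 + k) * s) : ℂ) * M s).memLp_of_hasCompactSupport hMc.mul_left)
    have j2 : Integrable fun s => K s * (Real.exp ((n / 2 + k) * s) * ψ s) :=
      hK2.integrable_mul (q := 2) ((by fun_prop : Continuous fun s =>
        (Real.exp ((n / 2 + k) * s) : ℂ) * ψ s).memLp_of_hasCompactSupport hψc.mul_left)
    rw [mul_zero, add_zero, add_zero, ← integral_const_mul, ← integral_sub j1 (j2.const_mul _)]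
      at hexp
    rw [hexp]
    refine integral_congr_ae (.of_forall fun s => ?_)
    have e1 : Real.exp (-2 * s) =
        Real.exp ((n / 2 + k) * s) * Real.exp (((4 - N) / 2 - 4) * s) := by
      rw [← Real.exp_add, hN]; congr 1; ring
    have e2 : Real.exp (2 * s) = Real.exp ((n / 2 + k) * s) * Real.exp ((4 - N) / 2 * s) := by
      rw [← Real.exp_add, hN]; congr 1; ring
    have hpq' : (2 * q - p ^ 2 : ℂ) = 2 * A - 4 := mod_cast hpq
    have hq2' : (q ^ 2 : ℂ) = A ^ 2 + c := mod_cast hq2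
    simp only [hM, hψ, hG]
    rw [quarticOp_ofReal A hg, e1, e2, hpq', hq2']
    push_cast
    ring
  intro ψ hψ hψc
  rw [hK ψ hψ.continuous hψc]
  refine integral_eq_zero_of_ae ?_
  filter_upwards [hK0] with s hs
  simp [hs]

end

section

variable {n : ℕ} {w : EuclideanSpace ℝ (Fin n) → ℂ}

lemma integrable_mul_isTest (hw : MemLp w 2 volume) {φ : EuclideanSpace ℝ (Fin n) → ℂ}
    (hφ : IsTest φ) : Integrable fun x => w x * φ x :=
  hw.integrable_mul (hφ.memLp (p := 2))

lemma norm_mul_rad_le {R : ℝ} {ψ : ℝ → ℂ} (hR : tsupport ψ ⊆ Metric.closedBall 0 R) (k : ℕ)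
    (a x : EuclideanSpace ℝ (Fin n)) :
    ‖w x * rad k a ψ x‖ ≤ (‖a‖ * Real.exp R) ^ k * ‖w x * rad 0 a ψ x‖ := by
  rcases eq_or_ne x 0 with rfl | hx
  · simp [rad]
  rw [rad_of_ne hx, rad_of_ne hx]
  by_cases h0 : ψ (Real.log ‖x‖) = 0
  · simp [h0]
  have h1 := hR (subset_tsupport ψ h0)
  rw [mem_closedBall_zero_iff, Real.norm_eq_abs, abs_le] at h1
  have h2 : ‖x‖ ≤ Real.exp R := (Real.log_le_iff_le_exp (norm_pos_iff.2 hx)).1 h1.2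
  have h3 : |inner ℝ a x| ≤ ‖a‖ * Real.exp R :=
    (abs_real_inner_le_norm a x).trans (by gcongr)
  rw [norm_mul, norm_mul, norm_pow, Complex.norm_real, Real.norm_eq_abs]
  have h4 : |inner ℝ a x| ^ k ≤ (‖a‖ * Real.exp R) ^ k := by gcongr
  calc _ = |inner ℝ a x| ^ k * (‖w x‖ * ‖ψ (Real.log ‖x‖)‖) := by ring
    _ ≤ (‖a‖ * Real.exp R) ^ k * (‖w x‖ * ‖ψ (Real.log ‖x‖)‖) := by gcongr
    _ = _ := by simp

lemma fourier_eq_zero_of_moments (hw : MemLp w 2 volume) {ψ : ℝ → ℂ}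
    (hψ : ContDiff ℝ (⊤ : ℕ∞) ψ) (hc : HasCompactSupport ψ)
    (h : ∀ a k, ∫ x, w x * rad k a ψ x = 0) (ξ : EuclideanSpace ℝ (Fin n)) :
    FourierTransform.fourier (fun x => w x * rad 0 0 ψ x) ξ = 0 := by
  obtain ⟨R, hR⟩ := hc.isCompact.isBounded.subset_closedBall 0
  set z : ℂ := -2 * Real.pi * Complex.I with hz
  have h0 : rad 0 ξ ψ = rad 0 0 ψ := by
    ext x; simp [rad]
  have hint : ∀ k, Integrable fun x => z ^ k / (k.factorial : ℂ) * (w x * rad k ξ ψ x) := fun k =>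
    (integrable_mul_isTest hw (isTest_rad hψ hc)).const_mul _
  have hsum : Summable fun k : ℕ => ∫ x, ‖z ^ k / (k.factorial : ℂ) * (w x * rad k ξ ψ x)‖ := by
    refine Summable.of_nonneg_of_le (fun k => integral_nonneg fun x => norm_nonneg _) (fun k => ?_)
      ((Real.summable_pow_div_factorial (‖z‖ * (‖ξ‖ * Real.exp R))).mul_right
        (∫ x, ‖w x * rad 0 ξ ψ x‖))
    rw [← integral_const_mul]
    refine integral_mono (hint k).norm
      ((integrable_mul_isTest hw (isTest_rad hψ hc)).norm.const_mul _) fun x => ?_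
    dsimp only
    rw [norm_mul, norm_div, norm_pow, Complex.norm_natCast, mul_pow, mul_div_right_comm, mul_assoc]
    gcongr
    exact norm_mul_rad_le hR k ξ x
  have key := hasSum_integral_of_summable_integral_norm hint hsum
  simp only [integral_const_mul, h, mul_zero] at key
  rw [Real.fourier_eq', ← key.unique hasSum_zero]
  refine integral_congr_ae (ae_of_all _ fun x => ?_)
  dsimp only
  have he := NormedSpace.expSeries_div_hasSum_exp (z * (inner ℝ ξ x : ℝ))
  rw [← Complex.exp_eq_exp_ℂ] at he
  rw [show Complex.exp ((-2 * Real.pi * inner ℝ x ξ : ℝ) * Complex.I) =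
    Complex.exp (z * (inner ℝ ξ x : ℝ)) by
      rw [real_inner_comm, hz]; push_cast; ring_nf, smul_eq_mul,
    ← (he.mul_right (w x * rad 0 0 ψ x)).tsum_eq]
  refine tsum_congr fun k => ?_
  rcases eq_or_ne x 0 with rfl | hx
  · simp [rad]
  rw [rad_of_ne hx, rad_of_ne hx]
  ring

lemma integral_mul_eq_zero_of_fourier_eq_zero {F : EuclideanSpace ℝ (Fin n) → ℂ}
    (hF : Integrable F) (h : ∀ ξ, FourierTransform.fourier F ξ = 0)
    (φ : SchwartzMap (EuclideanSpace ℝ (Fin n)) ℂ) : ∫ x, F x * φ x = 0 := by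
  have h1 := VectorFourier.integral_fourierIntegral_smul_eq_flip
    (L := innerₗ (EuclideanSpace ℝ (Fin n))) Real.continuous_fourierChar continuous_inner hF
    (FourierTransformInv.fourierInv φ).integrable (μ := volume) (ν := volume)
  have h2 : ∀ ξ, VectorFourier.fourierIntegral Real.fourierChar volume
    (innerₗ (EuclideanSpace ℝ (Fin n))) F ξ = 0 := h
  simp only [h2, flip_innerₗ, smul_eq_mul, zero_mul, integral_zero] at h1
  rw [h1]
  refine integral_congr_ae (ae_of_all _ fun x => ?_)
  dsimp only
  congr 1
  have h3 : (FourierTransform.fourier (FourierTransformInv.fourierInv φ) :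
    SchwartzMap (EuclideanSpace ℝ (Fin n)) ℂ) = φ := FourierTransform.fourier_fourierInv_eq φ
  rw [← congrArg (fun f : SchwartzMap (EuclideanSpace ℝ (Fin n)) ℂ => f x) h3]
  rfl

/-- A square-integrable function all of whose moments `∫ w ⟨a, x⟩^k ψ(log |x|)` vanish is zero. -/
lemma ae_eq_zero_of_moments (hn : 0 < n) (hw : MemLp w 2 volume)
    (h : ∀ a k, ∀ ψ : ℝ → ℂ, ContDiff ℝ (⊤ : ℕ∞) ψ → HasCompactSupport ψ →
      ∫ x, w x * rad k a ψ x = 0) : w =ᵐ[volume] 0 := by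
  refine ae_eq_zero_of_forall_isTest hn
    ((hw.locallyIntegrable (by norm_num)).locallyIntegrableOn _) fun φ hφ => ?_
  have hlog : ContinuousOn (fun x : EuclideanSpace ℝ (Fin n) => Real.log ‖x‖)
      (tsupport fun x => (φ x : ℂ)) := fun x hx =>
    (continuous_norm.continuousAt.log (norm_ne_zero_iff.2 (hφ.ne_zero hx))).continuousWithinAt
  obtain ⟨R, hR⟩ := (hφ.compact.isCompact.image_of_continuousOn hlog).isBounded.subset_closedBall 0
  let b : ContDiffBump (0 : ℝ) := ⟨|R| + 1, |R| + 2, by positivity, by linarith⟩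
  let ψ : ℝ → ℂ := fun s => (b s : ℂ)
  have hψ : ContDiff ℝ (⊤ : ℕ∞) ψ := Complex.ofRealCLM.contDiff.comp b.contDiff
  have hc : HasCompactSupport ψ := b.hasCompactSupport.comp_left (g := ((↑) : ℝ → ℂ)) rfl
  have hF : Integrable fun x => w x * rad 0 0 ψ x :=
    integrable_mul_isTest hw (isTest_rad hψ hc)
  have := integral_mul_eq_zero_of_fourier_eq_zero hF
    (fourier_eq_zero_of_moments hw hψ hc fun a k => h a k ψ hψ hc)
    (hφ.compact.toSchwartzMap hφ.contDiff)
  rw [← this]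
  refine integral_congr_ae (ae_of_all _ fun x => ?_)
  simp only [HasCompactSupport.toSchwartzMap_toFun, Complex.real_smul]
  by_cases hx : φ x = 0
  · simp [hx]
  have hx' : x ∈ tsupport fun x => (φ x : ℂ) := subset_tsupport _ (by simpa using hx)
  have h1 := hR (Set.mem_image_of_mem _ hx')
  have h2 : ψ (Real.log ‖x‖) = 1 := by
    have : b (Real.log ‖x‖) = 1 := b.one_of_mem_closedBall
      (Metric.closedBall_subset_closedBall (by dsimp [b]; linarith [le_abs_self R]) h1)
    simp [ψ, this]
  rw [rad_of_ne (hφ.ne_zero hx'), h2]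
  simp [mul_comm]

end

/-- Essential self-adjointness of `Δ² + c|x|⁻⁴` above the critical coupling. -/
theorem essentiallySelfAdjoint_T2op {n : ℕ} (hn : 2 ≤ n) {c : ℝ}
    (h₁ : n ≤ 5 → 3 * ((n : ℝ) + 2) * (6 - n) ≤ c)
    (h₂ : 6 ≤ n → -((n : ℝ) * (n + 4) * (n - 4) * (n - 8)) / 16 ≤ c) :
    EssentiallySelfAdjoint (T2op n c) :=
  essentiallySelfAdjoint_T2op_of_injective (by omega) fun _ hζ hζ0 _ hw hweak =>
    ae_eq_zero_of_moments (by omega) hw fun a k =>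
      integral_mul_rad_eq_zero hn h₁ h₂ hζ hζ0 hw hweak a k

/-- The function `(p + q s) e^{zs}`. -/
def affineExp (p q z : ℂ) (s : ℝ) : ℂ := (p + q * s) * Complex.exp (z * s)

lemma contDiff_affineExp (p q z : ℂ) : ContDiff ℝ (⊤ : ℕ∞) (affineExp p q z) := by
  have h : ContDiff ℝ (⊤ : ℕ∞) ((↑) : ℝ → ℂ) := Complex.ofRealCLM.contDiff
  exact (contDiff_const.add (contDiff_const.mul h)).mul (contDiff_const.mul h).cexp

lemma deriv_affineExp (p q z : ℂ) : deriv (affineExp p q z) = affineExp (q + z * p) (z * q) z := by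
  ext s
  have h : HasDerivAt ((↑) : ℝ → ℂ) 1 s := Complex.ofRealCLM.hasDerivAt
  have := ((h.const_mul q).const_add p).mul (h.const_mul z).cexp
  refine (HasDerivAt.deriv (f := affineExp p q z) this).trans ?_
  simp only [affineExp]
  ring

lemma norm_affineExp_le {ε s : ℝ} (hε : 0 < ε) (hs : s ≤ 0) (p q z : ℂ) :
    ‖affineExp p q z s‖ ≤ (‖p‖ + ‖q‖ / ε) * Real.exp ((z.re - ε) * s) := by
  have h1 : 1 ≤ Real.exp (-(ε * s)) := Real.one_le_exp (by nlinarith)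
  have h2 : |s| ≤ Real.exp (-(ε * s)) / ε := by
    rw [abs_of_nonpos hs, le_div_iff₀ hε]
    linarith [Real.add_one_le_exp (-(ε * s))]
  have h3 : ‖p + q * s‖ ≤ (‖p‖ + ‖q‖ / ε) * Real.exp (-(ε * s)) := by
    refine (norm_add_le _ _).trans ?_
    rw [norm_mul, Complex.norm_real, Real.norm_eq_abs, add_mul]
    refine add_le_add (le_mul_of_one_le_right (norm_nonneg p) h1) ?_
    exact (mul_le_mul_of_nonneg_left h2 (norm_nonneg q)).trans_eq (by ring)
  rw [affineExp, norm_mul, Complex.norm_exp, sub_mul, sub_eq_neg_add, Real.exp_add, ← mul_assoc]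
  have h4 : (z * s).re = z.re * s := by simp
  rw [h4]
  gcongr

/-- The boundary form of the operator `D⁴ + (2A - 4)D² + A²`. -/
def quarticForm (A : ℝ) (f g : ℝ → ℂ) (s : ℝ) : ℂ :=
  deriv (deriv (deriv f)) s * g s - deriv (deriv f) s * deriv g s +
    deriv f s * deriv (deriv g) s - f s * deriv (deriv (deriv g)) s +
    (2 * A - 4) * (deriv f s * g s - f s * deriv g s)

section

variable {A : ℝ} {f g f' g' : ℝ → ℂ} {s : ℝ}

lemma quarticOp_congr (h : f =ᶠ[𝓝 s] g) : quarticOp A f s = quarticOp A g s := by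
  simp only [quarticOp, h.eq_of_nhds, h.deriv.deriv.eq_of_nhds,
    h.deriv.deriv.deriv.deriv.eq_of_nhds]

lemma quarticForm_congr (h : f =ᶠ[𝓝 s] f') (h' : g =ᶠ[𝓝 s] g') :
    quarticForm A f g s = quarticForm A f' g' s := by
  simp only [quarticForm, h.eq_of_nhds, h.deriv.eq_of_nhds, h.deriv.deriv.eq_of_nhds,
    h.deriv.deriv.deriv.eq_of_nhds, h'.eq_of_nhds, h'.deriv.eq_of_nhds,
    h'.deriv.deriv.eq_of_nhds, h'.deriv.deriv.deriv.eq_of_nhds]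

lemma contDiff_quarticOp (hf : ContDiff ℝ (⊤ : ℕ∞) f) : ContDiff ℝ (⊤ : ℕ∞) (quarticOp A f) :=
  have h2 := contDiff_deriv (contDiff_deriv hf)
  ((contDiff_deriv (contDiff_deriv h2)).add (contDiff_const.mul h2)).add (contDiff_const.mul hf)

lemma hasDerivAt_quarticForm (hf : ContDiff ℝ (⊤ : ℕ∞) f) (hg : ContDiff ℝ (⊤ : ℕ∞) g) (s : ℝ) :
    HasDerivAt (quarticForm A f g) (quarticOp A f s * g s - f s * quarticOp A g s) s := by
  have key : ∀ {u : ℝ → ℂ}, ContDiff ℝ (⊤ : ℕ∞) u → HasDerivAt u (deriv u s) s := fun h =>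
    (h.differentiable (by simp) s).hasDerivAt
  have f0 := key hf
  have f1 := key (contDiff_deriv hf)
  have f2 := key (contDiff_deriv (contDiff_deriv hf))
  have f3 := key (contDiff_deriv (contDiff_deriv (contDiff_deriv hf)))
  have g0 := key hg
  have g1 := key (contDiff_deriv hg)
  have g2 := key (contDiff_deriv (contDiff_deriv hg))
  have g3 := key (contDiff_deriv (contDiff_deriv (contDiff_deriv hg)))
  have := ((((f3.mul g0).sub (f2.mul g1)).add (f1.mul g2)).sub (f0.mul g3)).add
    (((f1.mul g0).sub (f0.mul g1)).const_mul (2 * (A : ℂ) - 4))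
  refine this.congr_deriv ?_
  simp only [quarticOp]
  ring

end

/-- A smooth cutoff equal to `1` on `(-∞, -1]` and to `0` on `[0, ∞)`. -/
def leftCutoff (f : ℝ → ℂ) (s : ℝ) : ℂ := (Real.smoothTransition (-s) : ℂ) * f s

section

variable {n : ℕ} {A c σ C : ℝ} {f g : ℝ → ℂ} {s : ℝ}

lemma contDiff_leftCutoff (hf : ContDiff ℝ (⊤ : ℕ∞) f) : ContDiff ℝ (⊤ : ℕ∞) (leftCutoff f) :=
  (Complex.ofRealCLM.contDiff.comp (Real.smoothTransition.contDiff.comp contDiff_neg)).mul hf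

lemma leftCutoff_of_nonneg (hs : 0 ≤ s) : leftCutoff f s = 0 := by
  simp [leftCutoff, Real.smoothTransition.zero_of_nonpos (neg_nonpos.2 hs)]

lemma leftCutoff_eventuallyEq_zero (hs : 0 < s) : leftCutoff f =ᶠ[𝓝 s] 0 := by
  filter_upwards [Ioi_mem_nhds hs] with t ht using leftCutoff_of_nonneg (le_of_lt ht)

lemma leftCutoff_eventuallyEq (hs : s < -1) : leftCutoff f =ᶠ[𝓝 s] f := by
  filter_upwards [Iio_mem_nhds hs] with t ht
  simp [leftCutoff, Real.smoothTransition.one_of_one_le (show 1 ≤ -t by linarith [Set.mem_Iio.1 ht])]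

lemma norm_leftCutoff_le : ‖leftCutoff f s‖ ≤ ‖f s‖ := by
  rw [leftCutoff, norm_mul, Complex.norm_real, Real.norm_eq_abs,
    abs_of_nonneg (Real.smoothTransition.nonneg _)]
  exact mul_le_of_le_one_left (norm_nonneg _) (Real.smoothTransition.le_one _)

/-- Where `f` solves the equation, only the cutoff region contributes. -/
lemma support_quarticOp_leftCutoff (hf : ∀ s, quarticOp A f s + c * f s = 0) :
    Function.support (fun s => quarticOp A (leftCutoff f) s + c * leftCutoff f s) ⊆
      Set.Icc (-1) 0 := by
  intro s hs
  by_contra h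
  rw [Set.mem_Icc, not_and_or, not_le, not_le] at h
  refine hs ?_
  dsimp only
  rcases h with h | h
  · have := leftCutoff_eventuallyEq (f := f) h
    rw [quarticOp_congr this, this.eq_of_nhds, hf]
  · have := leftCutoff_eventuallyEq_zero (f := f) h
    rw [quarticOp_congr this, this.eq_of_nhds]
    have hd : deriv (0 : ℝ → ℂ) = 0 := by ext; simp
    simp [quarticOp, hd]

lemma integrable_exp_mul_leftCutoff (hf : ContDiff ℝ (⊤ : ℕ∞) f) (hσ : -2 < σ)
    (hC : ∀ s ≤ 0, ‖f s‖ ≤ C * Real.exp (σ * s)) :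
    Integrable fun s => Real.exp (4 * s) * ‖leftCutoff f s‖ ^ 2 := by
  have hc : Continuous fun s => Real.exp (4 * s) * ‖leftCutoff f s‖ ^ 2 := by
    have := (contDiff_leftCutoff hf).continuous
    fun_prop
  have h : IntegrableOn (fun s => C ^ 2 * Real.exp ((4 + 2 * σ) * s)) (Set.Iic 0) :=
    (integrableOn_exp_mul_Iic (by linarith) 0).const_mul _
  refine Integrable.mono' (h.integrable_indicator measurableSet_Iic) hc.aestronglyMeasurable
    (ae_of_all _ fun s => ?_)
  rw [Real.norm_of_nonneg (by positivity)]
  by_cases hs : s ≤ 0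
  · rw [Set.indicator_of_mem (Set.mem_Iic.2 hs)]
    calc Real.exp (4 * s) * ‖leftCutoff f s‖ ^ 2
        ≤ Real.exp (4 * s) * (C * Real.exp (σ * s)) ^ 2 := by
          gcongr; exact norm_leftCutoff_le.trans (hC s hs)
      _ = C ^ 2 * Real.exp ((4 + 2 * σ) * s) := by
          rw [mul_pow, ← Real.exp_nat_mul, mul_left_comm, ← Real.exp_add]
          congr 2; push_cast; ring
  · rw [leftCutoff_of_nonneg (not_le.1 hs).le, Set.indicator_of_notMem (by simpa using hs)]
    simp

lemma memLp_rad_exp_mul (hn : 0 < n) (hf : ContDiff ℝ (⊤ : ℕ∞) f)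
    (hi : Integrable fun s => Real.exp (4 * s) * ‖f s‖ ^ 2) :
    MemLp (rad 0 (0 : EuclideanSpace ℝ (Fin n)) fun s => Real.exp ((4 - n) / 2 * s) * f s) 2
      volume := by
  set u := rad 0 (0 : EuclideanSpace ℝ (Fin n)) fun s => Real.exp ((4 - n) / 2 * s) * f s
  have hu : SmoothOff u := smoothOff_rad ((contDiff_exp_mul _).mul hf)
  have hm : AEStronglyMeasurable u volume := by
    have h0 : (volume : Measure (EuclideanSpace ℝ (Fin n))).restrict {0}ᶜ = volume :=
      Measure.restrict_eq_self_of_ae_mem (ae_ne_zero hn)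
    rw [← h0]
    exact hu.continuousOn.aestronglyMeasurable (measurableSet_singleton _).compl
  rw [memLp_two_iff_integrable_sq_norm hm]
  refine (integrable_comp_log_norm hn (f := fun s => Real.exp ((4 - n) * s) * ‖f s‖ ^ 2) ?_).congr ?_
  · refine hi.congr (ae_of_all _ fun s => ?_)
    simp only [smul_eq_mul]
    rw [← mul_assoc, ← Real.exp_add]
    congr 2; ring
  · filter_upwards [ae_ne_zero hn] with x hx
    simp only [u, rad_of_ne hx, pow_zero, one_mul, norm_mul, Complex.norm_real, mul_pow,
      Real.norm_eq_abs, Real.abs_exp, ← Real.exp_nat_mul]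
    congr 2; push_cast; ring

lemma quarticForm_eq_zero_of_essentiallySelfAdjoint (hn : 0 < n) (hA : A = n * (4 - n) / 4)
    (h : EssentiallySelfAdjoint (T2op n c)) (hσ : -2 < σ)
    (hf : ContDiff ℝ (⊤ : ℕ∞) f) (hg : ContDiff ℝ (⊤ : ℕ∞) g)
    (hPf : ∀ s, quarticOp A f s + c * f s = 0) (hPg : ∀ s, quarticOp A g s + c * g s = 0)
    (hfσ : ∀ s ≤ 0, ‖f s‖ ≤ C * Real.exp (σ * s)) (hgσ : ∀ s ≤ 0, ‖g s‖ ≤ C * Real.exp (σ * s)) :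
    quarticForm A f g (-2) = 0 := by
  let U : (ℝ → ℂ) → EuclideanSpace ℝ (Fin n) → ℂ := fun f =>
    rad 0 0 fun s => Real.exp ((4 - n) / 2 * s) * leftCutoff f s
  let P : (ℝ → ℂ) → ℝ → ℂ := fun f s => quarticOp A (leftCutoff f) s + c * leftCutoff f s
  have hP : ∀ {f : ℝ → ℂ}, ContDiff ℝ (⊤ : ℕ∞) f → ContDiff ℝ (⊤ : ℕ∞) (P f) := fun hf =>
    (contDiff_quarticOp (contDiff_leftCutoff hf)).add
      (contDiff_const.mul (contDiff_leftCutoff hf))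
  have hU : ∀ {f : ℝ → ℂ}, ContDiff ℝ (⊤ : ℕ∞) f → SmoothOff (U f) := fun hf =>
    smoothOff_rad ((contDiff_exp_mul _).mul (contDiff_leftCutoff hf))
  have hT : ∀ {f : ℝ → ℂ}, ContDiff ℝ (⊤ : ℕ∞) f → ∀ x ≠ 0, T2form c (U f) x =
      rad 0 0 (fun s => Real.exp (((4 - n) / 2 - 4) * s) * P f s) x := fun hf =>
    T2form_rad_zero_exp_mul c hA (contDiff_leftCutoff hf)
  have hTm : ∀ {f : ℝ → ℂ}, ContDiff ℝ (⊤ : ℕ∞) f → (∀ s, quarticOp A f s + c * f s = 0) →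
      MemLp (T2form c (U f)) 2 volume := by
    intro f hf hPf
    have h1 : HasCompactSupport (P f) := HasCompactSupport.of_support_subset_isCompact isCompact_Icc
      (support_quarticOp_leftCutoff hPf)
    refine ((isTest_rad ((contDiff_exp_mul ((4 - n) / 2 - 4)).mul (hP hf)) h1.mul_left).memLp
      (φ := rad 0 0 _)).ae_eq ?_
    filter_upwards [ae_ne_zero hn] with x hx using (hT hf x hx).symm
  have key := integral_T2form_eq_of_essentiallySelfAdjoint h (hU hf) (hU hg)
    (memLp_rad_exp_mul hn (contDiff_leftCutoff hf) (integrable_exp_mul_leftCutoff hf hσ hfσ))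
    (memLp_rad_exp_mul hn (contDiff_leftCutoff hg) (integrable_exp_mul_leftCutoff hg hσ hgσ))
    (hTm hf hPf) (hTm hg hPg)
  have hint : ∀ {f g : ℝ → ℂ}, ContDiff ℝ (⊤ : ℕ∞) f → ContDiff ℝ (⊤ : ℕ∞) g →
      ∫ x, T2form c (U f) x * U g x = sphereArea n • ∫ s, P f s * leftCutoff g s := by
    intro f g hf hg
    have h1 : Continuous fun s : ℝ => ((Real.exp (-n * s) : ℝ) : ℂ) * (P f s * leftCutoff g s) :=
      ((contDiff_exp_mul (-n)).continuous).mul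
        ((hP hf).continuous.mul (contDiff_leftCutoff hg).continuous)
    have h2 := integral_comp_log_norm hn h1
    have h3 : ∀ s : ℝ, Real.exp (n * s) • (((Real.exp (-n * s) : ℝ) : ℂ) *
        (P f s * leftCutoff g s)) = P f s * leftCutoff g s := fun s => by
      rw [Complex.real_smul, ← mul_assoc, ← Complex.ofReal_mul, ← Real.exp_add]
      simp
    simp only [h3] at h2
    rw [← h2]
    refine integral_congr_ae ?_
    filter_upwards [ae_ne_zero hn] with x hx
    rw [hT hf x hx]
    simp only [U, rad_of_ne hx, pow_zero, one_mul]
    rw [mul_mul_mul_comm, ← Complex.ofReal_mul, ← Real.exp_add]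
    congr 4; ring
  have key2 : ∫ s, P f s * leftCutoff g s = ∫ s, leftCutoff f s * P g s := by
    have h1 := hint hg hf
    simp only [mul_comm (T2form c (U g) _)] at h1
    rw [hint hf hg, h1] at key
    simp only [mul_comm (leftCutoff f _)]
    exact smul_right_injective ℂ (sphereArea_pos hn).ne' key
  have hsub : Set.Icc (-1 : ℝ) 0 ⊆ Set.Ioc (-2) 1 := fun s hs =>
    ⟨by linarith [hs.1], by linarith [hs.2]⟩
  rw [← intervalIntegral.integral_eq_integral_of_support_subset (a := -2) (b := 1)
      ((Function.support_mul_subset_left _ _).trans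
        ((support_quarticOp_leftCutoff hPf).trans hsub)),
    ← intervalIntegral.integral_eq_integral_of_support_subset (a := -2) (b := 1)
      ((Function.support_mul_subset_right _ _).trans
        ((support_quarticOp_leftCutoff hPg).trans hsub)), ← sub_eq_zero,
    ← intervalIntegral.integral_sub] at key2
  · have hcd := (contDiff_leftCutoff hf)
    have hcd' := (contDiff_leftCutoff hg)
    have h1 := intervalIntegral.integral_eq_sub_of_hasDerivAt (a := -2) (b := 1)
      (fun s _ => hasDerivAt_quarticForm (A := A) hcd hcd' s)
      ((((contDiff_quarticOp hcd).continuous.mul hcd'.continuous).sub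
        (hcd.continuous.mul (contDiff_quarticOp hcd').continuous)).intervalIntegrable _ _)
    have h2 : quarticForm A (leftCutoff f) (leftCutoff g) 1 = 0 := by
      rw [quarticForm_congr (leftCutoff_eventuallyEq_zero one_pos)
        (leftCutoff_eventuallyEq_zero one_pos)]
      have hd : deriv (0 : ℝ → ℂ) = 0 := by ext; simp
      simp [quarticForm, hd]
    rw [h2, quarticForm_congr (leftCutoff_eventuallyEq (by norm_num))
      (leftCutoff_eventuallyEq (by norm_num)), zero_sub] at h1
    rw [← neg_eq_zero, ← h1, ← key2]
    refine intervalIntegral.integral_congr fun s _ => ?_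
    ring
  · exact ((hP hf).continuous.mul (contDiff_leftCutoff hg).continuous).intervalIntegrable _ _
  · exact ((contDiff_leftCutoff hf).continuous.mul (hP hg).continuous).intervalIntegrable _ _

end

lemma exists_sqrt_re_lt {w : ℂ} (hw : ‖w‖ + w.re < 8) : ∃ z : ℂ, z ^ 2 = w ∧ |z.re| < 2 := by
  obtain ⟨z, hz⟩ := IsAlgClosed.exists_pow_nat_eq w two_pos
  refine ⟨z, hz, ?_⟩
  have h1 : ‖w‖ = z.re ^ 2 + z.im ^ 2 := by
    rw [← hz, norm_pow, Complex.sq_norm, Complex.normSq_apply]; ring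
  have h2 : w.re = z.re ^ 2 - z.im ^ 2 := by
    rw [← hz, sq, Complex.mul_re]; ring
  rw [abs_lt]
  constructor <;> nlinarith

lemma exists_root_re_lt {A c : ℝ} (h : (-2 < A ∧ c < 36 + 12 * A) ∨ c < -A ^ 2 - 8 * A) :
    ∃ z : ℂ, (z ^ 2 + A) ^ 2 - 4 * z ^ 2 + c = 0 ∧ |z.re| < 2 := by
  suffices ∃ w : ℂ, (w + A) ^ 2 - 4 * w + c = 0 ∧ ‖w‖ + w.re < 8 by
    obtain ⟨w, hw, hw'⟩ := this
    obtain ⟨z, rfl, hz⟩ := exists_sqrt_re_lt hw'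
    exact ⟨z, hw, hz⟩
  rcases le_or_gt 0 (4 - 4 * A - c) with hd | hd
  · have hs := Real.sq_sqrt hd
    have hs0 := Real.sqrt_nonneg (4 - 4 * A - c)
    set r := Real.sqrt (4 - 4 * A - c)
    refine ⟨((2 - A - r : ℝ) : ℂ), ?_, ?_⟩
    · norm_cast
      linear_combination hs
    · have h4 : 2 - A - r < 4 := by
        rcases h with h | h
        · linarith [h.1]
        · by_contra! h'
          nlinarith
      rw [Complex.norm_real, Real.norm_eq_abs, Complex.ofReal_re]
      rcases abs_cases (2 - A - r) with h' | h' <;> linarith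
  · have hs := Real.sq_sqrt (neg_pos.2 hd).le
    set r := Real.sqrt (-(4 - 4 * A - c))
    have hA : -2 < A ∧ c < 36 + 12 * A := by
      rcases h with h | h
      · exact h
      · nlinarith [sq_nonneg (A + 2)]
    refine ⟨⟨2 - A, r⟩, ?_, ?_⟩
    · apply Complex.ext
      · simp [sq]; linear_combination -hs
      · simp [sq]; ring
    · have h1 : ‖(⟨2 - A, r⟩ : ℂ)‖ ^ 2 = A ^ 2 + c := by
        rw [Complex.sq_norm, Complex.normSq_apply]
        dsimp only
        linear_combination hs
      have h2 : ‖(⟨2 - A, r⟩ : ℂ)‖ < 6 + A := by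
        refine lt_of_pow_lt_pow_left₀ 2 (by linarith) ?_
        rw [h1]; nlinarith
      dsimp only
      linarith

lemma norm_affineExp_le_abs {ε s : ℝ} (hε : 0 < ε) (hs : s ≤ 0) {p q : ℂ} (hp : ‖p‖ ≤ 1)
    (hq : ‖q‖ ≤ 1) (z : ℂ) :
    ‖affineExp p q z s‖ ≤ (1 + 1 / ε) * Real.exp ((-|z.re| - ε) * s) := by
  refine (norm_affineExp_le hε hs p q z).trans ?_
  have h : (z.re - ε) * s ≤ (-|z.re| - ε) * s :=
    mul_le_mul_of_nonpos_right (by linarith [neg_abs_le z.re]) hs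
  gcongr

lemma quarticOp_affineExp (A : ℝ) (p q z : ℂ) (s : ℝ) :
    quarticOp A (affineExp p q z) s =
      (z ^ 4 + (2 * A - 4) * z ^ 2 + A ^ 2) * affineExp p q z s +
        (4 * z ^ 3 + 2 * (2 * A - 4) * z) * q * Complex.exp (z * s) := by
  simp only [quarticOp, deriv_affineExp]
  simp only [affineExp]
  ring

lemma quarticForm_affineExp (A : ℝ) (p q z : ℂ) (s : ℝ) :
    quarticForm A (affineExp 1 0 z) (affineExp p q (-z)) s =
      (4 * z ^ 3 + 2 * (2 * A - 4) * z) * (p + q * s) - (6 * z ^ 2 + (2 * A - 4)) * q := by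
  have h : Complex.exp (z * s) * Complex.exp (-z * s) = 1 := by
    rw [← Complex.exp_add]; simp
  simp only [quarticForm, deriv_affineExp]
  simp only [affineExp]
  linear_combination ((4 * z ^ 3 + 2 * (2 * A - 4) * z) * (p + q * s) -
    (6 * z ^ 2 + (2 * A - 4)) * q) * h

/-- Failure of essential self-adjointness in the presence of an oscillating or slowly decaying
solution. -/
lemma not_essentiallySelfAdjoint_T2op_of_root {n : ℕ} {c A : ℝ} (hn : 0 < n)
    (hA : A = n * (4 - n) / 4) (hA2 : A < 2) {z : ℂ} (hz : (z ^ 2 + A) ^ 2 - 4 * z ^ 2 + c = 0)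
    (hzr : |z.re| < 2) : ¬ EssentiallySelfAdjoint (T2op n c) := by
  intro h
  have key : ∀ p q : ℂ, ‖p‖ ≤ 1 → ‖q‖ ≤ 1 → (4 * z ^ 3 + 2 * (2 * A - 4) * z) * q = 0 →
      (4 * z ^ 3 + 2 * (2 * A - 4) * z) * (p + q * (-2 : ℝ)) - (6 * z ^ 2 + (2 * A - 4)) * q = 0 := by
    intro p q hp hq hpq
    have hε : 0 < (2 - |z.re|) / 2 := by linarith
    rw [← quarticForm_affineExp]
    refine quarticForm_eq_zero_of_essentiallySelfAdjoint (C := 1 + 1 / ((2 - |z.re|) / 2))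
      (σ := -|z.re| - (2 - |z.re|) / 2) hn hA h (by linarith)
      (contDiff_affineExp _ _ _) (contDiff_affineExp _ _ _) (fun s => ?_) (fun s => ?_)
      (fun s hs => norm_affineExp_le_abs hε hs (by simp) (by simp) z) fun s hs => ?_
    · rw [quarticOp_affineExp]
      linear_combination affineExp 1 0 z s * hz
    · rw [quarticOp_affineExp]
      linear_combination affineExp p q (-z) s * hz - Complex.exp (-z * s) * hpq
    · simpa using norm_affineExp_le_abs hε hs hp hq (-z)
  have hP : 4 * z ^ 3 + 2 * (2 * A - 4) * z = 0 := by simpa using key 1 0 (by simp) (by simp) (by simp)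
  have hQ : 6 * z ^ 2 + (2 * A - 4) = 0 := by
    linear_combination ((-2 : ℝ) : ℂ) * hP - key 0 1 (by simp) (by simp) (by simp [hP])
  have hA' : (2 * A - 4 : ℂ) ≠ 0 := by
    norm_cast
    linarith
  refine hA' ?_
  rcases eq_or_ne z 0 with rfl | hz0
  · simpa using hQ
  · have h1 : 4 * z ^ 2 + 2 * (2 * A - 4) = 0 := by
      refine (mul_eq_zero.1 (?_ : z * (4 * z ^ 2 + 2 * (2 * A - 4)) = 0)).resolve_left hz0
      linear_combination hP
    linear_combination (3 / 4 : ℂ) * h1 - (1 / 2 : ℂ) * hQ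

theorem le_of_essentiallySelfAdjoint_T2op {n : ℕ} (hn : 2 ≤ n) {c : ℝ}
    (h : EssentiallySelfAdjoint (T2op n c)) :
    (n ≤ 5 → 3 * ((n : ℝ) + 2) * (6 - n) ≤ c) ∧
      (6 ≤ n → -((n : ℝ) * (n + 4) * (n - 4) * (n - 8)) / 16 ≤ c) := by
  have hn' : (2 : ℝ) ≤ n := by exact_mod_cast hn
  set A : ℝ := n * (4 - n) / 4 with hA
  have hA2 : A < 2 := by nlinarith [sq_nonneg ((n : ℝ) - 2)]
  have main : ¬ ((-2 < A ∧ c < 36 + 12 * A) ∨ c < -A ^ 2 - 8 * A) := fun hc => by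
    obtain ⟨z, hz, hzr⟩ := exists_root_re_lt hc
    exact not_essentiallySelfAdjoint_T2op_of_root (by omega) hA hA2 hz hzr h
  push Not at main
  refine ⟨fun h5 => ?_, fun _ => ?_⟩
  · have h5' : (n : ℝ) ≤ 5 := by exact_mod_cast h5
    have := main.1 (by nlinarith)
    rw [hA] at this
    linarith
  · have := main.2
    rw [hA] at this
    linarith

theorem stmt0 (n : ℕ) (hn : 2 ≤ n) (c : ℝ) :
    EssentiallySelfAdjoint (T2op n c) ↔
      ((n ≤ 5 → 3 * ((n : ℝ) + 2) * (6 - n) ≤ c) ∧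
        (6 ≤ n → -((n : ℝ) * (n + 4) * (n - 4) * (n - 8)) / 16 ≤ c)) := by
  exact ⟨le_of_essentiallySelfAdjoint_T2op hn, fun h => essentiallySelfAdjoint_T2op hn h.1 h.2⟩
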